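/- arXiv:2506.06263 — 6 statements merged into one kernel-verified Lean document; each statement's English description precedes it below -/
import Mathlib

section
/- Let n ≥ 2 be an integer and let w_1, …, w_n > 0 be positive reals. For (z_1, …, z_n) ∈ Δ_n, the polynomial R(z) = Σ_{j=1}^n w_j Π_{1 ≤ ℓ ≤ n, ℓ ≠ j} (z − z_ℓ) has degree n−1 and all of its roots are real; let F(z_1, …, z_n) ∈ Δ_{n−1} denote its nondecreasing sequence of roots counted with multiplicity. Then F is strictly increasing from (Δ_n, ≼) to (Δ_{n−1}, ≼): if (z_1, …, z_n) ≼ (z'_1, …, z'_n) then F(z_1, …, z_n) ≼ F(z'_1, …, z'_n), and if moreover (z_1, …, z_n) ≠ (z'_1, …, z'_n) then F(z_1, …, z_n) ≠ F(z'_1, …, z'_n). -/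
/-!
Write `R_z = ∑ j, w_j ∏_{ℓ ≠ j} (X - z_ℓ)`, `P_z = ∏ j, (X - z_j)` and `f_z = R_z / P_z`, so that
`f_z(x) = ∑ j, w_j / (x - z_j)`.

The roots interlace: `z_i ≤ s_i ≤ z_{i+1}`. When the `z_j` are distinct this is the intermediate
value theorem, since `R_z` changes sign between consecutive `z_j` (`exists_roots_of_strictMono`).
Otherwise `z` is approximated by the strictly increasing tuples `z_j + ε j`; a limit point of their
root tuples factors `R_z` (`exists_roots_interlace`), and a sorted factorization is unique
(`eq_of_factorization`).

Suppose `s'_i < x < s_i`. By interlacing `z_i ≤ z'_i < x < z_{i+1} ≤ z'_{i+1}`, so `x - z_j` and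
`x - z'_j` have the same sign for every `j`, whence `f_z(x) ≤ f_{z'}(x)`. Counting negative
factors, however, gives `R_z(x) P_z(x) > 0 > R_{z'}(x) P_{z'}(x)`, a contradiction.

For strictness, comparing subleading coefficients gives
`∑ j, (∑ k, w_k - w_j) z_j = (∑ k, w_k) ∑ i, s_i`, and for `n ≥ 2` all coefficients on the left are
positive, so the sum of the roots strictly increases when `z` does.
-/

open Polynomial

/-- The polynomial `∑ j, w_j ∏_{ℓ ≠ j} (X - z_ℓ)`. -/
noncomputable def weightedPoly {n : ℕ} (w z : Fin n → ℝ) : ℝ[X] :=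
  ∑ j, C (w j) * ∏ ℓ ∈ Finset.univ.erase j, (X - C (z ℓ))

lemma eval_weightedPoly {n : ℕ} (w z : Fin n → ℝ) (x : ℝ) :
    (weightedPoly w z).eval x = ∑ j, w j * ∏ ℓ ∈ Finset.univ.erase j, (x - z ℓ) := by
  simp [weightedPoly, eval_finsetSum, eval_prod]

lemma eval_weightedPoly_node {n : ℕ} (w z : Fin n → ℝ) (j : Fin n) :
    (weightedPoly w z).eval (z j) = w j * ∏ ℓ ∈ Finset.univ.erase j, (z j - z ℓ) := by
  rw [eval_weightedPoly]
  refine Finset.sum_eq_single j (fun k _ hk => ?_) (by simp)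
  rw [Finset.prod_eq_zero (i := j) (by simp [hk.symm]) (sub_self _), mul_zero]

/-- `R_z` takes values of opposite sign at consecutive distinct nodes. -/
lemma eval_mul_eval_neg {m : ℕ} (w z : Fin (m + 1) → ℝ) (hw : ∀ j, 0 < w j) (hz : StrictMono z)
    (i : Fin m) :
    (weightedPoly w z).eval (z i.castSucc) * (weightedPoly w z).eval (z i.succ) < 0 := by
  have hne : i.castSucc ≠ i.succ := (Fin.castSucc_lt_succ (i := i)).ne
  have hlt := hz (Fin.castSucc_lt_succ (i := i))
  rw [eval_weightedPoly_node, eval_weightedPoly_node,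
    ← Finset.mul_prod_erase (Finset.univ.erase i.castSucc) _ (a := i.succ) (by simp [hne.symm]),
    ← Finset.mul_prod_erase (Finset.univ.erase i.succ) _ (a := i.castSucc) (by simp [hne]),
    Finset.erase_right_comm (a := i.succ)]
  set S := (Finset.univ.erase i.castSucc).erase i.succ with hS
  have hpos : 0 < (∏ ℓ ∈ S, (z i.castSucc - z ℓ)) * ∏ ℓ ∈ S, (z i.succ - z ℓ) := by
    rw [← Finset.prod_mul_distrib]
    refine Finset.prod_pos fun ℓ hℓ => ?_
    simp only [hS, Finset.mem_erase, Finset.mem_univ, and_true] at hℓ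
    rcases lt_or_ge ℓ i.castSucc with h | h
    · have := hz h
      exact mul_pos (by linarith) (by linarith)
    · have h1 : i.succ < ℓ := by
        have h3 := Fin.val_ne_of_ne hℓ.1
        have h4 := Fin.val_ne_of_ne hℓ.2
        simp only [Fin.le_def, Fin.lt_def, Fin.val_succ, Fin.val_castSucc] at *
        omega
      have := hz h1
      exact mul_pos_of_neg_of_neg (by linarith) (by linarith)
  have h2 : 0 < w i.castSucc * w i.succ * (z i.succ - z i.castSucc) ^ 2 :=
    mul_pos (mul_pos (hw _) (hw _)) (by have := sub_pos.2 hlt; positivity)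
  nlinarith [mul_pos h2 hpos]

/-- `m` distinct roots determine `R_z`, whose leading coefficient is `∑ j, w_j`. -/
lemma weightedPoly_eq_of_roots {m : ℕ} (w z : Fin (m + 1) → ℝ) (t : Fin m → ℝ)
    (ht : Function.Injective t) (h : ∀ i, (weightedPoly w z).eval (t i) = 0) :
    weightedPoly w z = C (∑ j, w j) * ∏ i, (X - C (t i)) := by
  refine Polynomial.eq_of_degree_sub_lt_of_eval_index_eq Finset.univ (v := t) ht.injOn ?_ ?_
  · rw [← mem_degreeLT]
    have : weightedPoly w z - C (∑ j, w j) * ∏ i, (X - C (t i)) =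
        ∑ j, w j • ((∏ ℓ ∈ Finset.univ.erase j, (X - C (z ℓ))) - ∏ i, (X - C (t i))) := by
      simp only [weightedPoly, map_sum, Finset.sum_mul, smul_eq_C_mul, mul_sub,
        Finset.sum_sub_distrib]
    rw [this]
    refine Submodule.sum_mem _ fun j _ => Submodule.smul_mem _ _ ?_
    rw [mem_degreeLT]
    have m1 : (∏ ℓ ∈ Finset.univ.erase j, (X - C (z ℓ))).Monic :=
      monic_prod_of_monic _ _ fun _ _ => monic_X_sub_C _
    have m2 : (∏ i, (X - C (t i))).Monic := monic_prod_of_monic _ _ fun _ _ => monic_X_sub_C _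
    have d1 : (∏ ℓ ∈ Finset.univ.erase j, (X - C (z ℓ))).degree = (m : WithBot ℕ) := by
      rw [degree_eq_natDegree m1.ne_zero, natDegree_finsetProd_X_sub_C_eq_card]
      simp
    have d2 : (∏ i, (X - C (t i))).degree = (m : WithBot ℕ) := by
      rw [degree_eq_natDegree m2.ne_zero, natDegree_finsetProd_X_sub_C_eq_card]
      simp
    have := degree_sub_lt_left (d1.trans d2.symm) m1.ne_zero (m1.trans m2.symm)
    simpa [d1] using this
  · intro i _
    rw [h i, eval_mul, eval_prod, Finset.prod_eq_zero (Finset.mem_univ i) (by simp), mul_zero]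

lemma exists_roots_of_strictMono {m : ℕ} (w z : Fin (m + 1) → ℝ) (hw : ∀ j, 0 < w j)
    (hz : StrictMono z) :
    ∃ t : Fin m → ℝ, (∀ i, z i.castSucc ≤ t i ∧ t i ≤ z i.succ) ∧
      weightedPoly w z = C (∑ j, w j) * ∏ i, (X - C (t i)) := by
  have key : ∀ i : Fin m, ∃ x, z i.castSucc < x ∧ x < z i.succ ∧
      (weightedPoly w z).eval x = 0 := by
    intro i
    have hs := eval_mul_eval_neg w z hw hz i
    have hle := (hz (Fin.castSucc_lt_succ (i := i))).le
    have hc : ContinuousOn (fun x => (weightedPoly w z).eval x)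
        (Set.Icc (z i.castSucc) (z i.succ)) := (weightedPoly w z).continuous.continuousOn
    rcases mul_neg_iff.1 hs with ⟨h1, h2⟩ | ⟨h1, h2⟩
    · obtain ⟨x, hx, h0⟩ := intermediate_value_Ioo' hle hc ⟨h2, h1⟩
      exact ⟨x, hx.1, hx.2, h0⟩
    · obtain ⟨x, hx, h0⟩ := intermediate_value_Ioo hle hc ⟨h1, h2⟩
      exact ⟨x, hx.1, hx.2, h0⟩
  choose t h1 h2 h3 using key
  have ht : StrictMono t := fun i j hij =>
    ((h2 i).trans_le (hz.monotone (Fin.succ_le_castSucc_iff.2 hij))).trans (h1 j)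
  exact ⟨t, fun i => ⟨(h1 i).le, (h2 i).le⟩, weightedPoly_eq_of_roots w z t ht.injective h3⟩

/-- Existence of an interlacing factorization for arbitrary sorted `z`, by compactness. -/
lemma exists_roots_interlace {m : ℕ} (w z : Fin (m + 1) → ℝ) (hw : ∀ j, 0 < w j)
    (hz : Monotone z) :
    ∃ t : Fin m → ℝ, (∀ i, z i.castSucc ≤ t i ∧ t i ≤ z i.succ) ∧
      weightedPoly w z = C (∑ j, w j) * ∏ i, (X - C (t i)) := by
  let e : ℕ → ℝ := fun k => 1 / ((k : ℝ) + 1)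
  have he : Filter.Tendsto e Filter.atTop (nhds 0) := tendsto_one_div_add_atTop_nhds_zero_nat
  have hepos : ∀ k, 0 < e k := fun k => by positivity
  have hele : ∀ k, e k ≤ 1 := fun k => by
    have : (1 : ℝ) ≤ (k : ℝ) + 1 := by simp
    exact div_le_one_of_le₀ this (by positivity)
  let Z : ℕ → Fin (m + 1) → ℝ := fun k j => z j + e k * (j : ℕ)
  have hZmono : ∀ k, StrictMono (Z k) := fun k a b hab => by
    have h1 := hz hab.le
    have h2 : ((a : ℕ) : ℝ) < ((b : ℕ) : ℝ) := by exact_mod_cast hab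
    have := mul_lt_mul_of_pos_left h2 (hepos k)
    simp only [Z]
    linarith
  have hZlim : ∀ j, Filter.Tendsto (fun k => Z k j) Filter.atTop (nhds (z j)) := fun j => by
    simpa using (he.mul_const ((j : ℕ) : ℝ)).const_add (z j)
  choose T hT hfac using fun k => exists_roots_of_strictMono w (Z k) hw (hZmono k)
  have hbdd : ∀ k, T k ∈ Set.Icc (fun i : Fin m => z i.castSucc)
      (fun i : Fin m => z i.succ + (i.succ : ℕ)) := by
    intro k
    refine ⟨fun i => le_trans ?_ (hT k i).1, fun i => (hT k i).2.trans ?_⟩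
    · simp only [Z]
      have : 0 ≤ e k * ((i.castSucc : ℕ) : ℝ) := mul_nonneg (hepos k).le (Nat.cast_nonneg _)
      linarith
    · simp only [Z]
      have : e k * ((i.succ : ℕ) : ℝ) ≤ 1 * ((i.succ : ℕ) : ℝ) :=
        mul_le_mul_of_nonneg_right (hele k) (Nat.cast_nonneg _)
      linarith
  obtain ⟨t, -, φ, hφ, hlim⟩ := isCompact_Icc.tendsto_subseq hbdd
  have hlim' : ∀ i, Filter.Tendsto (fun k => T (φ k) i) Filter.atTop (nhds (t i)) :=
    fun i => (tendsto_pi_nhds.1 hlim) i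
  have hZlim' : ∀ j, Filter.Tendsto (fun k => Z (φ k) j) Filter.atTop (nhds (z j)) :=
    fun j => (hZlim j).comp hφ.tendsto_atTop
  refine ⟨t, fun i => ⟨le_of_tendsto_of_tendsto' (hZlim' _) (hlim' i) fun k => (hT _ i).1,
    le_of_tendsto_of_tendsto' (hlim' i) (hZlim' _) fun k => (hT _ i).2⟩, ?_⟩
  refine Polynomial.funext fun x => ?_
  have hL : Filter.Tendsto (fun k => (weightedPoly w (Z (φ k))).eval x) Filter.atTop
      (nhds ((weightedPoly w z).eval x)) := by
    simp only [eval_weightedPoly]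
    exact tendsto_finsetSum _ fun j _ => (tendsto_finsetProd _ fun ℓ _ =>
      (hZlim' ℓ).const_sub x).const_mul _
  have hR : Filter.Tendsto (fun k => (weightedPoly w (Z (φ k))).eval x) Filter.atTop
      (nhds ((C (∑ j, w j) * ∏ i, (X - C (t i))).eval x)) := by
    simp only [hfac, eval_mul, eval_C, eval_prod, eval_sub, eval_X]
    exact (tendsto_finsetProd _ fun i _ => (hlim' i).const_sub x).const_mul _
  exact tendsto_nhds_unique hL hR

/-- The sorted tuple of roots is determined by the polynomial. -/
lemma eq_of_factorization {m : ℕ} {W : ℝ} (hW : W ≠ 0) {s t : Fin m → ℝ} (hs : Monotone s)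
    (ht : Monotone t) (h : C W * ∏ i, (X - C (s i)) = C W * ∏ i, (X - C (t i))) : s = t := by
  have h1 : ∏ i, (X - C (s i)) = ∏ i, (X - C (t i)) := mul_left_cancel₀ (C_ne_zero.2 hW) h
  have hroots : ∀ u : Fin m → ℝ, (∏ i, (X - C (u i))).roots = (List.ofFn u : Multiset ℝ) := by
    intro u
    rw [← roots_multiset_prod_X_sub_C (List.ofFn u : Multiset ℝ)]
    simp [List.prod_ofFn, List.map_ofFn]
  have h2 : (List.ofFn s).Perm (List.ofFn t) := by
    rw [← Multiset.coe_eq_coe, ← hroots, ← hroots, h1]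
  exact List.ofFn_injective (h2.eq_of_sortedLE hs.sortedLE_ofFn ht.sortedLE_ofFn)

lemma interlace {m : ℕ} (w z : Fin (m + 1) → ℝ) (hw : ∀ j, 0 < w j) (hz : Monotone z)
    (s : Fin m → ℝ) (hs : Monotone s)
    (h : weightedPoly w z = C (∑ j, w j) * ∏ i, (X - C (s i))) (i : Fin m) :
    z i.castSucc ≤ s i ∧ s i ≤ z i.succ := by
  obtain ⟨t, ht, hfac⟩ := exists_roots_interlace w z hw hz
  have htm : Monotone t := fun i j hij => by
    rcases hij.eq_or_lt with rfl | hij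
    · exact le_rfl
    · exact ((ht i).2.trans (hz (Fin.succ_le_castSucc_iff.2 hij))).trans (ht j).1
  have hW : (∑ j, w j) ≠ 0 :=
    (Finset.sum_pos (fun j _ => hw j) Finset.univ_nonempty).ne'
  rw [eq_of_factorization hW hs htm (h.symm.trans hfac)]
  exact ht i

/-- `R_z P_z > 0` on `(z_i, s_i)`: after splitting off the factor `x - z_i`, the remaining linear
factors of `R_z` and `P_z` pair up with equal signs. -/
lemma eval_mul_prod_pos {m : ℕ} {W : ℝ} (hW : 0 < W) {z : Fin (m + 1) → ℝ} (hz : Monotone z)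
    {s : Fin m → ℝ} (hs : Monotone s) (hi : ∀ i, z i.castSucc ≤ s i ∧ s i ≤ z i.succ)
    (i : Fin m) (x : ℝ) (h1 : z i.castSucc < x) (h2 : x < s i) :
    0 < (W * ∏ k, (x - s k)) * ∏ j, (x - z j) := by
  have : 0 < W * (x - z i.castSucc) *
      ∏ k, ((x - s k) * (x - z (i.castSucc.succAbove k))) := by
    refine mul_pos (mul_pos hW (by linarith)) (Finset.prod_pos fun k _ => ?_)
    rcases lt_or_ge k i with h | h
    · rw [Fin.succAbove_of_castSucc_lt _ _ (by simpa using h)]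
      have := (hi k).2
      have := (hi k).1
      have := hz (show k.succ ≤ i.castSucc from Fin.succ_le_castSucc_iff.2 h)
      exact mul_pos (by linarith) (by linarith)
    · rw [Fin.succAbove_of_le_castSucc _ _ (by simpa using h)]
      have := hs h
      have := (hi k).2
      exact mul_pos_of_neg_of_neg (by linarith) (by linarith)
  rw [Fin.prod_univ_succAbove _ i.castSucc]
  rw [Finset.prod_mul_distrib] at this
  linarith

/-- `R_z P_z < 0` on `(s_i, z_{i+1})`: after splitting off the negative factor `x - z_{i+1}`, the
remaining linear factors of `R_z` and `P_z` pair up with equal signs. -/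
lemma eval_mul_prod_neg {m : ℕ} {W : ℝ} (hW : 0 < W) {z : Fin (m + 1) → ℝ} (hz : Monotone z)
    {s : Fin m → ℝ} (hs : Monotone s) (hi : ∀ i, z i.castSucc ≤ s i ∧ s i ≤ z i.succ)
    (i : Fin m) (x : ℝ) (h1 : x < z i.succ) (h2 : s i < x) :
    (W * ∏ k, (x - s k)) * ∏ j, (x - z j) < 0 := by
  have : 0 < W * (z i.succ - x) *
      ∏ k, ((x - s k) * (x - z (i.succ.succAbove k))) := by
    refine mul_pos (mul_pos hW (by linarith)) (Finset.prod_pos fun k _ => ?_)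
    rcases lt_or_ge i k with h | h
    · rw [Fin.succAbove_of_le_castSucc _ _ (Fin.succ_le_castSucc_iff.2 h)]
      have := (hi k).2
      have := (hi k).1
      have := hz (show i.succ ≤ k.castSucc from Fin.succ_le_castSucc_iff.2 h)
      exact mul_pos_of_neg_of_neg (by linarith) (by linarith)
    · rw [Fin.succAbove_of_castSucc_lt _ _ (Fin.castSucc_lt_succ_iff.2 h)]
      have := hs h
      have := (hi k).1
      exact mul_pos (by linarith) (by linarith)
  rw [Fin.prod_univ_succAbove _ i.succ]
  rw [Finset.prod_mul_distrib] at this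
  linarith

/-- `R_z(x) = f_z(x) P_z(x)` off the nodes. -/
lemma eval_weightedPoly_eq {n : ℕ} (w z : Fin n → ℝ) (x : ℝ) (hx : ∀ j, x - z j ≠ 0) :
    (weightedPoly w z).eval x = (∑ j, w j / (x - z j)) * ∏ j, (x - z j) := by
  rw [eval_weightedPoly, Finset.sum_mul]
  refine Finset.sum_congr rfl fun j _ => ?_
  rw [← Finset.mul_prod_erase Finset.univ _ (Finset.mem_univ j)]
  have := hx j
  field_simp

lemma roots_le {m : ℕ} (w z z' : Fin (m + 1) → ℝ) (hw : ∀ j, 0 < w j) (hz : Monotone z)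
    (hz' : Monotone z') (hzz' : ∀ j, z j ≤ z' j) (s s' : Fin m → ℝ) (hs : Monotone s)
    (hs' : Monotone s') (h : weightedPoly w z = C (∑ j, w j) * ∏ i, (X - C (s i)))
    (h' : weightedPoly w z' = C (∑ j, w j) * ∏ i, (X - C (s' i))) (i : Fin m) : s i ≤ s' i := by
  by_contra! hlt
  obtain ⟨x, hx1, hx2⟩ := exists_between hlt
  have hi := interlace w z hw hz s hs h
  have hi' := interlace w z' hw hz' s' hs' h'
  have hW : 0 < ∑ j, w j := Finset.sum_pos (fun j _ => hw j) Finset.univ_nonempty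
  have hsplit : ∀ j, (z' j < x) ∨ (x < z j) := by
    intro j
    rcases le_or_gt j i.castSucc with hj | hj
    · exact Or.inl (((hz' hj).trans (hi' i).1).trans_lt hx1)
    · exact Or.inr (hx2.trans_le ((hi i).2.trans (hz (Fin.castSucc_lt_iff_succ_le.1 hj))))
  have hne : ∀ j, x - z j ≠ 0 := fun j => by
    rcases hsplit j with hj | hj
    · have := hzz' j
      exact ne_of_gt (by linarith)
    · exact ne_of_lt (by linarith)
  have hne' : ∀ j, x - z' j ≠ 0 := fun j => by
    rcases hsplit j with hj | hj
    · exact ne_of_gt (by linarith)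
    · have := hzz' j
      exact ne_of_lt (by linarith)
  have hp := eval_mul_prod_pos hW hz hs hi i x
    (((hzz' _).trans (hi' i).1).trans_lt hx1) hx2
  have hn := eval_mul_prod_neg hW hz' hs' hi' i x
    (hx2.trans_le ((hi i).2.trans (hzz' _))) hx1
  have e1 := eval_weightedPoly_eq w z x hne
  have e2 := eval_weightedPoly_eq w z' x hne'
  rw [h, eval_mul, eval_C, eval_prod] at e1
  rw [h', eval_mul, eval_C, eval_prod] at e2
  simp only [eval_sub, eval_X, eval_C] at e1 e2
  rw [e1, mul_assoc] at hp
  rw [e2, mul_assoc] at hn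
  have f1 : 0 < ∑ j, w j / (x - z j) := pos_of_mul_pos_left hp (mul_self_nonneg _)
  have f2 : ∑ j, w j / (x - z' j) < 0 := by
    by_contra! hc
    exact absurd hn (not_lt.2 (mul_nonneg hc (mul_self_nonneg _)))
  have f3 : ∑ j, w j / (x - z j) ≤ ∑ j, w j / (x - z' j) := by
    refine Finset.sum_le_sum fun j _ => ?_
    have hle : x - z' j ≤ x - z j := by have := hzz' j; linarith
    rw [div_eq_mul_inv, div_eq_mul_inv]
    refine mul_le_mul_of_nonneg_left ?_ (hw j).le
    rcases hsplit j with hj | hj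
    · exact inv_anti₀ (by linarith) hle
    · exact (inv_le_inv_of_neg (by linarith) (by linarith)).2 hle
  linarith

/-- Comparison of the subleading coefficients of `R_z` and its factorization. -/
lemma sum_roots {m : ℕ} (hm : 0 < m) (w z : Fin (m + 1) → ℝ) (s : Fin m → ℝ)
    (h : weightedPoly w z = C (∑ j, w j) * ∏ i, (X - C (s i))) :
    ∑ j, w j * ∑ ℓ ∈ Finset.univ.erase j, z ℓ = (∑ j, w j) * ∑ i, s i := by
  have hc := congrArg (fun p => p.coeff (m - 1)) h
  have h1 : ∀ j : Fin (m + 1), (∏ ℓ ∈ Finset.univ.erase j, (X - C (z ℓ))).coeff (m - 1)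
      = -∑ ℓ ∈ Finset.univ.erase j, z ℓ := fun j => by
    simpa using prod_X_sub_C_coeff_card_pred (Finset.univ.erase j) z (by simpa using hm)
  have h2 : (∏ i, (X - C (s i))).coeff (m - 1) = -∑ i, s i := by
    simpa using prod_X_sub_C_coeff_card_pred Finset.univ s (by simpa using hm)
  simp only [weightedPoly, finsetSum_coeff, coeff_C_mul, h1, h2, mul_neg,
    Finset.sum_neg_distrib, neg_inj] at hc
  exact hc

/-- Monotonicity of the root map
`(z_1,…,z_n) ↦` nondecreasing roots of `Σ_j w_j Π_{ℓ≠j} (X - z_ℓ)`.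
The root sequences `s`, `s'` are encoded by the factorization of the polynomial
(whose leading coefficient is `Σ_j w_j`) into linear factors. -/
theorem stmt0 (n : ℕ) (hn : 2 ≤ n) (w : Fin n → ℝ) (hw : ∀ j, 0 < w j)
    (z z' : Fin n → ℝ) (hz : Monotone z) (hz' : Monotone z')
    (hzz' : ∀ j, z j ≤ z' j)
    (s s' : Fin (n - 1) → ℝ) (hs : Monotone s) (hs' : Monotone s')
    (hfac : (∑ j, C (w j) * ∏ ℓ ∈ Finset.univ.erase j, (X - C (z ℓ)))
      = C (∑ j, w j) * ∏ i, (X - C (s i)))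
    (hfac' : (∑ j, C (w j) * ∏ ℓ ∈ Finset.univ.erase j, (X - C (z' ℓ)))
      = C (∑ j, w j) * ∏ i, (X - C (s' i))) :
    (∀ i, s i ≤ s' i) ∧ (z ≠ z' → s ≠ s') := by
  obtain ⟨m, rfl⟩ : ∃ m, n = m + 1 := ⟨n - 1, by omega⟩
  refine ⟨roots_le w z z' hw hz hz' hzz' s s' hs hs' hfac hfac', ?_⟩
  rintro hne rfl
  have hm : 0 < m := by omega
  have e1 := sum_roots hm w z s hfac
  have e2 := sum_roots hm w z' s hfac'
  obtain ⟨k, hk⟩ := Function.ne_iff.1 hne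
  have hk : z k < z' k := lt_of_le_of_ne (hzz' k) hk
  have : Nontrivial (Fin (m + 1)) := Fin.nontrivial_iff_two_le.2 hn
  obtain ⟨j, hj⟩ := exists_ne k
  have hlt : ∑ j, w j * ∑ ℓ ∈ Finset.univ.erase j, z ℓ
      < ∑ j, w j * ∑ ℓ ∈ Finset.univ.erase j, z' ℓ := by
    refine Finset.sum_lt_sum (fun i _ => mul_le_mul_of_nonneg_left
      (Finset.sum_le_sum fun ℓ _ => hzz' ℓ) (hw i).le) ⟨j, Finset.mem_univ j, ?_⟩
    exact mul_lt_mul_of_pos_left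
      (Finset.sum_lt_sum (fun ℓ _ => hzz' ℓ) ⟨k, by simp [hj.symm], hk⟩) (hw j)
  linarith
end

section
/- Let n ≥ 2 be an integer. For (z_1, …, z_n) ∈ Δ_n, let F(z_1, …, z_n) ∈ Δ_{n−1} denote the nondecreasing sequence of roots, counted with multiplicity, of the derivative of the polynomial Π_{j=1}^n (z − z_j) (equivalently, the roots of Σ_{j=1}^n Π_{ℓ ≠ j} (z − z_ℓ)). Then for all (z_1, …, z_n), (z'_1, …, z'_n) ∈ Δ_n, the Lévy distance between the empirical measures of F(z_1, …, z_n) and F(z'_1, …, z'_n) is at most n/(n−1) times the Lévy distance between the empirical measures of (z_1, …, z_n) and (z'_1, …, z'_n). -/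
/-!
Write `N_z(x)` for the number of entries of `z` that are at most `x`. An `ε` admissible for the
Lévy distance of `z, z'` satisfies `N_z(x - ε) ≤ N_{z'}(x) + k` for all `x`, where `k = ⌊nε⌋`, and
the same with `z, z'` exchanged. The core of the proof (`rootCount_critical_le`) is that this
inequality passes, with the same `ε` and `k`, to the critical points: `N_s(x - ε) ≤ N_{s'}(x) + k`.
Since `k / (n - 1) ≤ (n / (n - 1)) ε`, the number `(n / (n - 1)) ε` is then admissible
for `s, s'`.

For the core, the counts are right continuous, so `x` may be moved slightly to avoid all roots.
Rolle's theorem on the two half-lines cut at `x` (`card_filter_roots_le_derivative`) gives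
`N_z(x) - 1 ≤ N_s(x) ≤ N_z(x)`, and comparing the signs of `P(x)` and `P'(x)` shows that the upper
value is taken exactly when the logarithmic derivative `∑ 1 / (x - z_j)` is negative
(`rootCount_critical_eq_iff`). The only case in which interlacing alone does not suffice is
`N_s(x - ε) = N_z(x - ε) = N_{z'}(x) + k`. Then the terms of `∑ 1 / (x - z'_l)` are bounded
one by one by those of `∑ 1 / (x - ε - z_{l + k})`, indices being taken modulo `n`
(`sum_inv_le`): for `l + k < n` the hypothesis gives `z'_l ≤ z_{l + k} + ε`, with both sides on the
same side of `x`, and for the indices that wrap around the left term is negative and the right term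
positive. So the second logarithmic derivative is negative as well, and `N_{s'}(x) = N_{z'}(x)`.
-/

open Polynomial

/-- The distribution function of the empirical measure of the tuple `z`. -/
noncomputable def empCDF {p : ℕ} (z : Fin p → ℝ) (x : ℝ) : ℝ :=
  ((Finset.univ.filter (fun j => z j ≤ x)).card : ℝ) / p

/-- The Lévy distance between two probability measures on `ℝ`, expressed through their
distribution functions `F` and `G`:
`L = inf {ε > 0 : ∀ x, F(x-ε) - ε ≤ G(x) ≤ F(x+ε) + ε}`. -/
noncomputable def levyDistCDF (F G : ℝ → ℝ) : ℝ :=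
  sInf {ε : ℝ | 0 < ε ∧ ∀ x : ℝ, F (x - ε) - ε ≤ G x ∧ G x ≤ F (x + ε) + ε}

/-- The number of entries of the tuple `z` that are at most `x`. -/
noncomputable def rootCount {p : ℕ} (z : Fin p → ℝ) (x : ℝ) : ℕ :=
  (Finset.univ.filter (fun j => z j ≤ x)).card

theorem rootCount_le {p : ℕ} (z : Fin p → ℝ) (x : ℝ) : rootCount z x ≤ p := by
  unfold rootCount
  simpa using Finset.card_filter_le (Finset.univ : Finset (Fin p)) (fun j => z j ≤ x)

theorem rootCount_mono {p : ℕ} (z : Fin p → ℝ) : Monotone (rootCount z) := fun _ _ hxy =>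
  Finset.card_le_card fun _ hj => by
    simp only [Finset.mem_filter, Finset.mem_univ, true_and] at hj ⊢
    exact hj.trans hxy

theorem card_filter_not_le {p : ℕ} (z : Fin p → ℝ) (x : ℝ) :
    (Finset.univ.filter (fun j => ¬ z j ≤ x)).card = p - rootCount z x := by
  have h := Finset.card_filter_add_card_filter_not (s := (Finset.univ : Finset (Fin p)))
    (fun j => z j ≤ x)
  simp only [Finset.card_univ, Fintype.card_fin] at h
  unfold rootCount
  omega

theorem lt_rootCount_iff {p : ℕ} {z : Fin p → ℝ} (hz : Monotone z) (x : ℝ) (i : Fin p) :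
    (i : ℕ) < rootCount z x ↔ z i ≤ x := by
  constructor
  · intro h
    by_contra hi
    have hsub : Finset.univ.filter (fun j => z j ≤ x) ⊆ Finset.Iio i := by
      intro j hj
      simp only [Finset.mem_filter, Finset.mem_univ, true_and] at hj
      rw [Finset.mem_Iio]
      by_contra hij
      exact hi ((hz (not_lt.1 hij)).trans hj)
    have := Finset.card_le_card hsub
    rw [Fin.card_Iio] at this
    unfold rootCount at h
    omega
  · intro h
    have hsub : Finset.Iic i ⊆ Finset.univ.filter (fun j => z j ≤ x) := by
      intro j hj
      simp only [Finset.mem_filter, Finset.mem_univ, true_and]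
      exact (hz (Finset.mem_Iic.1 hj)).trans h
    have := Finset.card_le_card hsub
    rw [Fin.card_Iic] at this
    unfold rootCount
    omega

/-! ### Interlacing of roots and critical points -/

/-- Rolle's theorem with multiplicities, localized to an order-connected set `S`. -/
theorem card_filter_roots_le_derivative (p : ℝ[X]) (S : Set ℝ) [DecidablePred (· ∈ S)]
    (hS : S.OrdConnected) :
    Multiset.card (p.roots.filter (· ∈ S)) ≤
      Multiset.card ((derivative p).roots.filter (· ∈ S)) + 1 := by
  rcases eq_or_ne (derivative p) 0 with hp' | hp'
  · rw [eq_C_of_derivative_eq_zero hp']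
    simp
  have hp : p ≠ 0 := ne_of_apply_ne derivative (by rwa [derivative_zero])
  set A := p.roots.filter (· ∈ S) with hA
  set B := (derivative p).roots.filter (· ∈ S) with hB
  have hint : A.toFinset.card ≤ (B.toFinset \ A.toFinset).card + 1 := by
    refine Finset.card_le_sdiff_of_interleaved fun x hx y hy hxy hxy' => ?_
    simp only [hA, Multiset.mem_toFinset, Multiset.mem_filter, mem_roots hp] at hx hy
    obtain ⟨z, hz1, hz2⟩ := exists_deriv_eq_zero hxy p.continuousOn (hx.1.trans hy.1.symm)
    refine ⟨z, ?_, hz1⟩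
    simp only [hB, Multiset.mem_toFinset, Multiset.mem_filter, mem_roots hp']
    exact ⟨by rwa [IsRoot, ← p.deriv], hS.out hx.2 hy.2 ⟨hz1.1.le, hz1.2.le⟩⟩
  have hcount : ∀ x ∈ A.toFinset, A.count x ≤ B.count x + 1 := by
    intro x hx
    have hxS : x ∈ S := by
      simp only [hA, Multiset.mem_toFinset, Multiset.mem_filter] at hx
      exact hx.2
    have := rootMultiplicity_sub_one_le_derivative_rootMultiplicity p x
    rw [hA, hB, Multiset.count_filter_of_pos hxS, Multiset.count_filter_of_pos hxS,
      count_roots, count_roots]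
    omega
  calc
    Multiset.card A = ∑ x ∈ A.toFinset, A.count x := (Multiset.toFinset_sum_count_eq _).symm
    _ ≤ ∑ x ∈ A.toFinset, (B.count x + 1) := Finset.sum_le_sum hcount
    _ = (∑ x ∈ A.toFinset, B.count x) + A.toFinset.card := by
      simp only [Finset.sum_add_distrib, Finset.card_eq_sum_ones]
    _ ≤ (∑ x ∈ A.toFinset, B.count x) + ((∑ x ∈ B.toFinset \ A.toFinset, B.count x) + 1) := by
      simp only [Finset.card_eq_sum_ones] at hint ⊢
      refine Nat.add_le_add_left (hint.trans (Nat.add_le_add_right ?_ 1)) _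
      refine Finset.sum_le_sum fun x hx => ?_
      rw [Nat.succ_le_iff, Multiset.count_pos, ← Multiset.mem_toFinset]
      exact (Finset.mem_sdiff.1 hx).1
    _ = Multiset.card B + 1 := by
      rw [← add_assoc, ← Finset.sum_union Finset.disjoint_sdiff, Finset.union_sdiff_self_eq_union,
        ← Multiset.toFinset_sum_count_eq, ← Finset.sum_subset Finset.subset_union_right]
      intro x _ hx₂
      simpa only [Multiset.mem_toFinset, Multiset.count_eq_zero] using hx₂

theorem roots_prod_tuple {p : ℕ} (z : Fin p → ℝ) :
    (∏ j, (X - C (z j))).roots = Finset.univ.val.map z := by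
  rw [← roots_multiset_prod_X_sub_C (Finset.univ.val.map z), Multiset.map_map]
  rfl

theorem roots_derivative_tuple {n : ℕ} (hn : 2 ≤ n) {z : Fin n → ℝ} {s : Fin (n - 1) → ℝ}
    (hfac : derivative (∏ j, (X - C (z j))) = C (n : ℝ) * ∏ i, (X - C (s i))) :
    (derivative (∏ j, (X - C (z j)))).roots = Finset.univ.val.map s := by
  have hn0 : (n : ℝ) ≠ 0 := by
    have : n ≠ 0 := by omega
    exact_mod_cast this
  rw [hfac, roots_C_mul _ hn0, roots_prod_tuple]

theorem card_filter_map {p : ℕ} (z : Fin p → ℝ) (q : ℝ → Prop) [DecidablePred q] :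
    Multiset.card ((Finset.univ.val.map z).filter q) =
      (Finset.univ.filter (fun j => q (z j))).card := by
  rw [Multiset.filter_map, Multiset.card_map]
  rfl

theorem interlacing {n : ℕ} (hn : 2 ≤ n) {z : Fin n → ℝ} {s : Fin (n - 1) → ℝ}
    (hfac : derivative (∏ j, (X - C (z j))) = C (n : ℝ) * ∏ i, (X - C (s i))) (x : ℝ) :
    rootCount z x ≤ rootCount s x + 1 ∧ rootCount s x ≤ rootCount z x := by
  classical
  have h1 := card_filter_roots_le_derivative (∏ j, (X - C (z j))) (Set.Iic x) Set.ordConnected_Iic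
  have h2 := card_filter_roots_le_derivative (∏ j, (X - C (z j))) (Set.Ioi x) Set.ordConnected_Ioi
  rw [roots_derivative_tuple hn hfac, roots_prod_tuple, card_filter_map, card_filter_map] at h1 h2
  simp only [Set.mem_Iic, Set.mem_Ioi, ← not_le] at h1 h2
  rw [card_filter_not_le, card_filter_not_le] at h2
  have := rootCount_le z x
  have := rootCount_le s x
  refine ⟨h1, ?_⟩
  omega

/-! ### The sign of the logarithmic derivative -/

theorem sign_prod {p : ℕ} (z : Fin p → ℝ) (x : ℝ) (hx : ∀ j, x ≠ z j) :
    0 < (-1 : ℝ) ^ (p - rootCount z x) * ∏ j, (x - z j) := by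
  have h : (-1 : ℝ) ^ (p - rootCount z x) = ∏ j, (if z j ≤ x then (1 : ℝ) else -1) := by
    rw [Finset.prod_ite, Finset.prod_const, Finset.prod_const, one_pow, one_mul,
      card_filter_not_le]
  rw [h, ← Finset.prod_mul_distrib]
  refine Finset.prod_pos fun j _ => ?_
  split_ifs with hj
  · have := lt_of_le_of_ne hj (hx j).symm
    linarith
  · linarith

theorem eval_derivative_tuple {p : ℕ} (z : Fin p → ℝ) (x : ℝ) (hx : ∀ j, x ≠ z j) :
    (derivative (∏ j, (X - C (z j)))).eval x = (∏ j, (x - z j)) * ∑ j, (x - z j)⁻¹ := by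
  rw [derivative_prod_finset, eval_finsetSum, Finset.mul_sum]
  refine Finset.sum_congr rfl fun i _ => ?_
  have hi : x - z i ≠ 0 := sub_ne_zero.2 (hx i)
  rw [← Finset.mul_prod_erase _ _ (Finset.mem_univ i)]
  simp only [eval_prod, eval_sub, eval_X, eval_C, derivative_sub, derivative_X, derivative_C,
    sub_zero, mul_one]
  field_simp

/-- Of the two values allowed by interlacing, the sign of the logarithmic derivative selects one. -/
theorem rootCount_critical_eq_iff {n : ℕ} (hn : 2 ≤ n) {z : Fin n → ℝ} {s : Fin (n - 1) → ℝ}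
    (hfac : derivative (∏ j, (X - C (z j))) = C (n : ℝ) * ∏ i, (X - C (s i))) (x : ℝ)
    (hxz : ∀ j, x ≠ z j) (hxs : ∀ i, x ≠ s i) :
    rootCount s x = rootCount z x ↔ ∑ j, (x - z j)⁻¹ < 0 := by
  obtain ⟨hi1, hi2⟩ := interlacing hn hfac x
  have hn0 : (0 : ℝ) < n := by
    have : 0 < n := by omega
    exact_mod_cast this
  have hP := sign_prod z x hxz
  have hQ := sign_prod s x hxs
  have hev := eval_derivative_tuple z x hxz
  rw [hfac, eval_mul, eval_C, eval_prod] at hev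
  simp only [eval_sub, eval_X, eval_C] at hev
  set P := ∏ j, (x - z j)
  set Q := ∏ i, (x - s i)
  set S := ∑ j, (x - z j)⁻¹
  have hle := rootCount_le s x
  rcases Nat.lt_or_ge (rootCount s x) (rootCount z x) with hlt | hge
  · refine iff_of_false hlt.ne (not_lt.2 ?_)
    -- the exponents agree, so `P` and `n * Q = P * S` have the same sign
    have he : n - rootCount z x = n - 1 - rootCount s x := by omega
    rw [he] at hP
    set σ := (-1 : ℝ) ^ (n - 1 - rootCount s x)
    have h1 : 0 < (σ * P) * S := by
      have : (σ * P) * S = n * (σ * Q) := by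
        calc (σ * P) * S = σ * (P * S) := by ring
          _ = n * (σ * Q) := by rw [← hev]; ring
      rw [this]
      exact mul_pos hn0 hQ
    exact (pos_of_mul_pos_right h1 hP.le).le
  · have heq : rootCount s x = rootCount z x := le_antisymm hi2 hge
    refine iff_of_true heq ?_
    -- the exponents differ by one, so `P` and `n * Q = P * S` have opposite signs
    have he : n - rootCount z x = (n - 1 - rootCount s x) + 1 := by omega
    rw [he, pow_succ] at hP
    set σ := (-1 : ℝ) ^ (n - 1 - rootCount s x)
    have h1 : 0 < (σ * -1 * P) * (-S) := by
      have : (σ * -1 * P) * (-S) = n * (σ * Q) := by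
        calc (σ * -1 * P) * (-S) = σ * (P * S) := by ring
          _ = n * (σ * Q) := by rw [← hev]; ring
      rw [this]
      exact mul_pos hn0 hQ
    have := pos_of_mul_pos_right h1 hP.le
    linarith

/-! ### Comparison of the critical points of two tuples -/

/-- If the roots `z'` are dominated by the roots `z` shifted by `k` places and by `ε`, and `x - ε`,
`x` have aligned positions relative to them, then the logarithmic derivatives are comparable. -/
theorem sum_inv_le {n : ℕ} {z z' : Fin n → ℝ} (hz : Monotone z) (hz' : Monotone z')
    {ε : ℝ} {k : ℕ} (hk : k < n)
    (hN : ∀ x, rootCount z (x - ε) ≤ rootCount z' x + k) (x : ℝ)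
    (hxz : ∀ j, x - ε ≠ z j)
    (heq : rootCount z (x - ε) = rootCount z' x + k) :
    ∑ j, (x - z' j)⁻¹ ≤ ∑ j, (x - ε - z j)⁻¹ := by
  have : NeZero n := ⟨by omega⟩
  rw [← Equiv.sum_comp (Equiv.addRight (⟨k, hk⟩ : Fin n)) (fun j => (x - ε - z j)⁻¹)]
  refine Finset.sum_le_sum fun l _ => ?_
  simp only [Equiv.coe_addRight]
  set m : Fin n := l + ⟨k, hk⟩ with hm
  have hl := l.isLt
  have hmval : (m : ℕ) = (l + k) % n := by rw [hm, Fin.val_add]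
  have hiz := lt_rootCount_iff hz (x - ε) m
  have hiz' := lt_rootCount_iff hz' x l
  have hc := rootCount_le z (x - ε)
  rcases Nat.lt_or_ge (l + k) n with hlk | hlk
  · rw [Nat.mod_eq_of_lt hlk] at hmval
    -- the defining inequality at `z m + ε` gives `z' l ≤ z m + ε`
    have hdom : z' l ≤ z m + ε := by
      rw [← lt_rootCount_iff hz']
      have h1 := hN (z m + ε)
      rw [add_sub_cancel_right] at h1
      have h2 := (lt_rootCount_iff hz (z m) m).2 le_rfl
      omega
    by_cases hlt : z' l ≤ x
    · have h1 : z m ≤ x - ε := hiz.1 (by have := hiz'.2 hlt; omega)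
      have h2 := lt_of_le_of_ne h1 (hxz m).symm
      exact inv_anti₀ (by linarith) (by linarith)
    · have h1 : ¬ z m ≤ x - ε := fun h => hlt (hiz'.1 (by have := hiz.2 h; omega))
      exact (inv_le_inv_of_neg (by linarith) (by linarith)).2 (by linarith)
  · have hmval' : (m : ℕ) = l + k - n := by
      rw [hmval, Nat.mod_eq_sub_mod hlk, Nat.mod_eq_of_lt (by omega)]
    have h1 : z m ≤ x - ε := hiz.1 (by omega)
    have h2 : ¬ z' l ≤ x := fun h => by have := hiz'.2 h; omega
    have h3 : (x - z' l)⁻¹ ≤ 0 := inv_nonpos.2 (by linarith)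
    have h4 : 0 ≤ (x - ε - z m)⁻¹ := inv_nonneg.2 (by linarith)
    exact h3.trans h4

theorem eventually_generic_point (u c : ℝ) :
    ∀ᶠ δ in nhdsWithin (0 : ℝ) (Set.Ioi 0), u + δ ≠ c ∧ (c ≤ u + δ ↔ c ≤ u) := by
  rcases le_or_gt c u with h | h
  · filter_upwards [self_mem_nhdsWithin] with δ hδ
    have hδ' : 0 < δ := hδ
    exact ⟨ne_of_gt (by linarith), iff_of_true (by linarith) h⟩
  · filter_upwards [Ioo_mem_nhdsGT (sub_pos.2 h)] with δ hδ
    have hδ' := hδ.2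
    exact ⟨ne_of_lt (by linarith), iff_of_false (by linarith) (by linarith)⟩

/-- Moving slightly to the right avoids all entries of a tuple without changing the count. -/
theorem eventually_generic {p : ℕ} (z : Fin p → ℝ) (u : ℝ) :
    ∀ᶠ δ in nhdsWithin (0 : ℝ) (Set.Ioi 0),
      (∀ j, u + δ ≠ z j) ∧ rootCount z (u + δ) = rootCount z u := by
  filter_upwards [Filter.eventually_all.2 fun j => eventually_generic_point u (z j)] with δ hδ
  refine ⟨fun j => (hδ j).1, ?_⟩
  unfold rootCount
  congr 1
  exact Finset.filter_congr fun j _ => (hδ j).2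

/-- One-sided comparison of counts passes from roots to critical points, with the same shift `ε`
and the same defect `k`. -/
theorem rootCount_critical_le {n : ℕ} (hn : 2 ≤ n)
    {z z' : Fin n → ℝ} (hz : Monotone z) (hz' : Monotone z') {s s' : Fin (n - 1) → ℝ}
    (hfac : derivative (∏ j, (X - C (z j))) = C (n : ℝ) * ∏ i, (X - C (s i)))
    (hfac' : derivative (∏ j, (X - C (z' j))) = C (n : ℝ) * ∏ i, (X - C (s' i)))
    {ε : ℝ} {k : ℕ} (hN : ∀ x, rootCount z (x - ε) ≤ rootCount z' x + k) (x : ℝ) :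
    rootCount s (x - ε) ≤ rootCount s' x + k := by
  rcases Nat.lt_or_ge k n with hk | hk
  swap
  · have := rootCount_le s (x - ε)
    omega
  -- the counts of `z, z'` need not be preserved: their comparison `hN` holds at every point
  obtain ⟨δ, ⟨⟨h1, -⟩, h2, h2e⟩, ⟨h3, -⟩, h4, h4e⟩ :=
    (((eventually_generic z (x - ε)).and (eventually_generic s (x - ε))).and
      ((eventually_generic z' x).and (eventually_generic s' x))).exists
  have hxe : x - ε + δ = (x + δ) - ε := by ring
  rw [← h2e, ← h4e]
  rw [hxe] at h1 h2 ⊢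
  set y := x + δ
  obtain ⟨i1, i2⟩ := interlacing hn hfac (y - ε)
  obtain ⟨i1', i2'⟩ := interlacing hn hfac' y
  have hy := hN y
  by_contra hcon
  have heq : rootCount z (y - ε) = rootCount z' y + k := by omega
  have hneg := (rootCount_critical_eq_iff hn hfac (y - ε) h1 h2).1 (by omega)
  have hle := sum_inv_le hz hz' hk hN y h1 heq
  have := (rootCount_critical_eq_iff hn hfac' y h3 h4).2 (hle.trans_lt hneg)
  omega

/-! ### From counts to the Lévy distance -/

theorem empCDF_eq {p : ℕ} (z : Fin p → ℝ) (x : ℝ) : empCDF z x = (rootCount z x : ℝ) / p := rfl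

/-- One half of the Lévy condition passes from roots to critical points. The factor `n / (n - 1)`
comes only from normalizing the counts by `n - 1` instead of `n`. -/
theorem empCDF_critical_le {n : ℕ} (hn : 2 ≤ n)
    {z z' : Fin n → ℝ} (hz : Monotone z) (hz' : Monotone z') {s s' : Fin (n - 1) → ℝ}
    (hfac : derivative (∏ j, (X - C (z j))) = C (n : ℝ) * ∏ i, (X - C (s i)))
    (hfac' : derivative (∏ j, (X - C (z' j))) = C (n : ℝ) * ∏ i, (X - C (s' i)))
    {ε : ℝ} (hε : 0 < ε) (h : ∀ x, empCDF z (x - ε) ≤ empCDF z' x + ε) (x : ℝ) :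
    empCDF s (x - (n : ℝ) / ((n : ℝ) - 1) * ε) ≤ empCDF s' x + (n : ℝ) / ((n : ℝ) - 1) * ε := by
  have hn2 : (2 : ℝ) ≤ n := by exact_mod_cast hn
  have hn0 : (0 : ℝ) < n := by linarith
  have hn1 : (0 : ℝ) < (n : ℝ) - 1 := by linarith
  have hcast : ((n - 1 : ℕ) : ℝ) = (n : ℝ) - 1 := by
    rw [Nat.cast_sub (by omega), Nat.cast_one]
  have hN : ∀ y, rootCount z (y - ε) ≤ rootCount z' y + ⌊(n : ℝ) * ε⌋₊ := by
    intro y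
    have hy := h y
    rw [empCDF_eq, empCDF_eq, div_add' _ _ _ hn0.ne', div_le_div_iff_of_pos_right hn0] at hy
    have h1 : rootCount z (y - ε) - rootCount z' y ≤ ⌊(n : ℝ) * ε⌋₊ := by
      apply Nat.le_floor
      rcases le_total (rootCount z (y - ε)) (rootCount z' y) with hle | hle
      · rw [Nat.sub_eq_zero_of_le hle, Nat.cast_zero]
        positivity
      · rw [Nat.cast_sub hle]
        linarith
    omega
  have hcrit := rootCount_critical_le hn hz hz' hfac hfac' hN x
  have hfloor : (⌊(n : ℝ) * ε⌋₊ : ℝ) ≤ n * ε := Nat.floor_le (by positivity)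
  have hshift : ε ≤ (n : ℝ) / ((n : ℝ) - 1) * ε := by
    have : 1 ≤ (n : ℝ) / ((n : ℝ) - 1) := by
      rw [le_div_iff₀ hn1]
      linarith
    nlinarith
  have hmono : rootCount s (x - (n : ℝ) / ((n : ℝ) - 1) * ε) ≤ rootCount s (x - ε) :=
    rootCount_mono s (by linarith)
  have hfin : (rootCount s (x - (n : ℝ) / ((n : ℝ) - 1) * ε) : ℝ) ≤
      rootCount s' x + (⌊(n : ℝ) * ε⌋₊ : ℝ) := by exact_mod_cast hmono.trans hcrit
  rw [empCDF_eq, empCDF_eq, hcast, div_mul_eq_mul_div, ← add_div]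
  rw [div_mul_eq_mul_div] at hfin
  gcongr
  linarith

theorem empCDF_nonneg {p : ℕ} (z : Fin p → ℝ) (x : ℝ) : 0 ≤ empCDF z x := by
  rw [empCDF_eq]
  positivity

theorem empCDF_le_one {p : ℕ} (z : Fin p → ℝ) (x : ℝ) : empCDF z x ≤ 1 := by
  rw [empCDF_eq]
  exact div_le_one_of_le₀ (by exact_mod_cast rootCount_le z x) (Nat.cast_nonneg p)

/-- The map sending the roots of `Π (X - z_j)` to the roots of its
derivative is `n/(n-1)`-Lipschitz for the Lévy metric between empirical measures.
The root sequences `s`, `s'` of the derivatives are encoded by the factorization of the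
derivative (whose leading coefficient is `n`) into linear factors. -/
theorem stmt1 (n : ℕ) (hn : 2 ≤ n)
    (z z' : Fin n → ℝ) (hz : Monotone z) (hz' : Monotone z')
    (s s' : Fin (n - 1) → ℝ) (hs : Monotone s) (hs' : Monotone s')
    (hfac : derivative (∏ j, (X - C (z j))) = C (n : ℝ) * ∏ i, (X - C (s i)))
    (hfac' : derivative (∏ j, (X - C (z' j))) = C (n : ℝ) * ∏ i, (X - C (s' i))) :
    levyDistCDF (empCDF s) (empCDF s')
      ≤ ((n : ℝ) / ((n : ℝ) - 1)) * levyDistCDF (empCDF z) (empCDF z') := by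
  have hn2 : (2 : ℝ) ≤ n := by exact_mod_cast hn
  have hc : (0 : ℝ) < (n : ℝ) / ((n : ℝ) - 1) := div_pos (by linarith) (by linarith)
  rw [mul_comm, ← div_le_iff₀ hc]
  unfold levyDistCDF
  refine le_csInf ⟨1, one_pos, fun x => ?_⟩ ?_
  · have h1 := empCDF_le_one z (x - 1)
    have h2 := empCDF_nonneg z' x
    have h3 := empCDF_le_one z' x
    have h4 := empCDF_nonneg z (x + 1)
    exact ⟨by linarith, by linarith⟩
  · rintro ε ⟨hε, h⟩
    rw [div_le_iff₀ hc, mul_comm]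
    refine csInf_le ⟨0, fun _ hb => hb.1.le⟩ ⟨mul_pos hc hε, fun x => ⟨?_, ?_⟩⟩
    · have := empCDF_critical_le hn hz hz' hfac hfac' hε
        (fun y => by linarith [(h y).1]) x
      linarith
    · have := empCDF_critical_le hn hz' hz hfac' hfac hε
        (fun y => by
          have := (h (y - ε)).2
          rwa [sub_add_cancel] at this) (x + (n : ℝ) / ((n : ℝ) - 1) * ε)
      rwa [add_sub_cancel_right] at this
end

section
/- Let n, m ≥ 1 and q ≥ 1 be integers, and let Q be a real polynomial of degree n all of whose roots are real and positive, with nondecreasing root sequence q_1 ≤ q_2 ≤ … ≤ q_n (counted with multiplicity). Let P(z) = z^q Q(z^m). Then P'(z) = z^{q−1} S(z^m), where S(X) = q·Q(X) + m·X·Q'(X) is a polynomial of degree n, all roots of S are real and positive, and, writing s_1 ≤ … ≤ s_n for the roots of S counted with multiplicity, the roots of S interlace between 0 and the roots of Q: q_{j−1} ≤ s_j ≤ q_j for all 1 ≤ j ≤ n, with the convention q_0 = 0. -/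
/-!
The polynomial `x ^ q * Q x ^ m` has derivative `x ^ (q - 1) * Q x ^ (m - 1) * S x`, and it vanishes
at `0` and at every root of `Q`. If the roots of `Q` are distinct, Rolle's theorem on the
`n` consecutive gaps of `0 < q_1 < ⋯ < q_n` gives a zero of this derivative inside each gap;
neither `x` nor `Q x` vanishes there, so it is a root of `S`. As `S` has degree `n` and, for
monic `Q`, leading coefficient `q + m n`, these are all its roots (`exists_roots_of_strictMono`).

Multiple roots are handled by a limit (`exists_roots_of_monotone`): the roots `q_j` are perturbed
to the distinct values `q_j + j / (k + 1)`, the corresponding root sequences of `S` stay in a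
compact box, and the limit of a convergent subsequence satisfies the same weak inequalities and the
same factorization. Positivity in the limit follows from `S 0 = q * Q 0 ≠ 0`.
-/

open Polynomial

/-- The monic polynomial with root sequence `a`. -/
noncomputable def rootProd {n : ℕ} (a : Fin n → ℝ) : ℝ[X] := ∏ j, (X - C (a j))

/-- The polynomial `q Q + m X Q'`, for `Q` monic with root sequence `a`. -/
noncomputable def rootS {n : ℕ} (m q : ℕ) (a : Fin n → ℝ) : ℝ[X] :=
  C (q : ℝ) * rootProd a + C (m : ℝ) * X * derivative (rootProd a)

lemma rootProd_monic {n : ℕ} (a : Fin n → ℝ) : (rootProd a).Monic :=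
  monic_prod_of_monic _ _ fun j _ => monic_X_sub_C (a j)

lemma rootProd_natDegree {n : ℕ} (a : Fin n → ℝ) : (rootProd a).natDegree = n := by
  simp [rootProd]

lemma rootProd_coeff {n : ℕ} (a : Fin n → ℝ) : (rootProd a).coeff n = 1 := by
  have h := (rootProd_monic a).coeff_natDegree
  rwa [rootProd_natDegree] at h

lemma rootProd_eval {n : ℕ} (a : Fin n → ℝ) (x : ℝ) :
    (rootProd a).eval x = ∏ j, (x - a j) := by
  simp [rootProd, eval_prod]

lemma rootS_eval {n : ℕ} (m q : ℕ) (a : Fin n → ℝ) (x : ℝ) :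
    (rootS m q a).eval x =
      q * ∏ j, (x - a j) + m * x * ∑ j, ∏ k ∈ Finset.univ.erase j, (x - a k) := by
  rw [rootS, eval_add, eval_mul, eval_mul, rootProd_eval, rootProd, derivative_prod_finset]
  simp [eval_prod, eval_finsetSum]

lemma rootS_coeff {n : ℕ} (m q : ℕ) (a : Fin n → ℝ) (i : ℕ) :
    (rootS m q a).coeff i = (q + m * i) * (rootProd a).coeff i := by
  cases i with
  | zero => simp [rootS, mul_assoc]
  | succ i =>
    simp only [rootS, coeff_add, mul_assoc, coeff_C_mul, coeff_X_mul, coeff_derivative]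
    push_cast
    ring

/-- Rolle's theorem for `x ^ q * Q x ^ m` on the gap between `u` and `v`. -/
lemma exists_root_between {m q : ℕ} (hm : 1 ≤ m) (hq : 1 ≤ q) (Q : ℝ[X]) {u v : ℝ}
    (hu0 : 0 ≤ u) (huv : u < v) (hu : u = 0 ∨ Q.eval u = 0) (hv : Q.eval v = 0)
    (hQ : ∀ x ∈ Set.Ioo u v, Q.eval x ≠ 0) :
    ∃ x ∈ Set.Ioo u v, (C (q : ℝ) * Q + C (m : ℝ) * X * derivative Q).eval x = 0 := by
  obtain ⟨q, rfl⟩ := Nat.exists_eq_add_of_le' hq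
  obtain ⟨m, rfl⟩ := Nat.exists_eq_add_of_le' hm
  set G : ℝ[X] := X ^ (q + 1) * Q ^ (m + 1) with hG
  have hGu : G.eval u = 0 := by rcases hu with h | h <;> simp [hG, h]
  have hGv : G.eval v = 0 := by simp [hG, hv]
  obtain ⟨x, hx, hx0⟩ := exists_deriv_eq_zero (f := fun x => G.eval x) huv
    G.continuous.continuousOn (hGu.trans hGv.symm)
  refine ⟨x, hx, ?_⟩
  rw [Polynomial.deriv] at hx0
  have hxne : x ≠ 0 := (hu0.trans_lt hx.1).ne'
  have hQx := hQ x hx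
  have key : (derivative G).eval x = x ^ q * Q.eval x ^ m *
      (C ((q + 1 : ℕ) : ℝ) * Q + C ((m + 1 : ℕ) : ℝ) * X * derivative Q).eval x := by
    simp [hG, derivative_mul, derivative_pow]
    ring
  rw [key] at hx0
  exact (mul_eq_zero.mp hx0).resolve_left (mul_ne_zero (pow_ne_zero _ hxne) (pow_ne_zero _ hQx))

/-- The interlacing statement when the roots of `Q` are distinct. -/
lemma exists_roots_of_strictMono_s3 {n m q : ℕ} (hm : 1 ≤ m) (hq : 1 ≤ q)
    (a : Fin n → ℝ) (ha : StrictMono a) (hpos : ∀ j, 0 < a j) :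
    ∃ s : Fin n → ℝ, (∀ j, 0 ≤ s j) ∧
      rootS m q a = C ((q : ℝ) + m * n) * rootProd s ∧ (∀ j, s j ≤ a j) ∧
      (∀ i j : Fin n, (i : ℕ) + 1 = (j : ℕ) → a i ≤ s j) := by
  -- `b` is the sequence `a` with the convention `q_0 = 0` put in front.
  set b : Fin (n + 1) → ℝ := Fin.cons 0 a with hb
  have hb0 : b 0 = 0 := rfl
  have hbs : ∀ j : Fin n, b j.succ = a j := fun j => rfl
  have hbm : StrictMono b := by
    intro i j hij
    induction j using Fin.cases with
    | zero => exact absurd hij (Fin.not_lt_zero i)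
    | succ j =>
      induction i using Fin.cases with
      | zero => rw [hb0, hbs]; exact hpos j
      | succ i => rw [hbs, hbs]; exact ha (Fin.succ_lt_succ_iff.mp hij)
  have hroot : ∀ j, (rootProd a).eval (a j) = 0 := fun j => by
    rw [rootProd_eval]
    exact Finset.prod_eq_zero (Finset.mem_univ j) (sub_self _)
  have hex : ∀ j : Fin n, ∃ x ∈ Set.Ioo (b j.castSucc) (b j.succ), (rootS m q a).eval x = 0 := by
    intro j
    refine exists_root_between hm hq (rootProd a) ?_ (hbm Fin.castSucc_lt_succ) ?_ ?_ ?_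
    · rw [← hb0]; exact hbm.monotone (Fin.zero_le _)
    · generalize j.castSucc = i
      induction i using Fin.cases with
      | zero => exact Or.inl rfl
      | succ i => exact Or.inr (hroot i)
    · exact hroot j
    · intro x hx h0
      rw [rootProd_eval, Finset.prod_eq_zero_iff] at h0
      obtain ⟨k, -, hk⟩ := h0
      have hxk : x = b k.succ := by rw [hbs]; linarith
      rw [hxk] at hx
      have h1 := hbm.lt_iff_lt.mp hx.1
      have h2 := hbm.lt_iff_lt.mp hx.2
      simp only [Fin.lt_def, Fin.val_castSucc, Fin.val_succ] at h1 h2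
      omega
  choose s hs hs0 using hex
  have hlow : ∀ i j : Fin n, i < j → a i < s j := by
    intro i j hij
    refine lt_of_le_of_lt ?_ (hs j).1
    rw [← hbs]
    refine hbm.monotone ?_
    simpa [Fin.le_def, Nat.succ_le_iff] using hij
  have hup : ∀ j, s j < a j := fun j => (hs j).2
  have hsm : StrictMono s := fun i j hij => (hup i).trans (hlow i j hij)
  refine ⟨s, fun j => ?_, ?_, fun j => (hup j).le, fun i j hij => (hlow i j ?_).le⟩
  · refine le_trans ?_ (hs j).1.le
    rw [← hb0]; exact hbm.monotone (Fin.zero_le _)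
  · -- Both sides agree at the `n` points `s j`, and their coefficients agree from degree `n` on.
    refine Polynomial.eq_of_degree_sub_lt_of_eval_index_eq (s := Finset.univ) (v := s)
      hsm.injective.injOn ?_ ?_
    · rw [Finset.card_univ, Fintype.card_fin, degree_lt_iff_coeff_zero]
      intro i hi
      rw [coeff_sub, rootS_coeff, coeff_C_mul]
      rcases hi.eq_or_lt with rfl | hi
      · rw [rootProd_coeff, rootProd_coeff, sub_self]
      · rw [coeff_eq_zero_of_natDegree_lt (by rwa [rootProd_natDegree]),
          coeff_eq_zero_of_natDegree_lt (by rwa [rootProd_natDegree])]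
        simp
    · intro j _
      rw [hs0, eval_mul, rootProd_eval, Finset.prod_eq_zero (Finset.mem_univ j) (sub_self _),
        mul_zero]
  · rw [Fin.lt_def]; omega

/-- The interlacing statement for arbitrary multiplicities, by perturbation of the roots. -/
lemma exists_roots_of_monotone {n m q : ℕ} (hm : 1 ≤ m) (hq : 1 ≤ q)
    (a : Fin n → ℝ) (ha : Monotone a) (hpos : ∀ j, 0 < a j) :
    ∃ s : Fin n → ℝ, (∀ j, 0 < s j) ∧
      rootS m q a = C ((q : ℝ) + m * n) * rootProd s ∧ (∀ j, s j ≤ a j) ∧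
      (∀ i j : Fin n, (i : ℕ) + 1 = (j : ℕ) → a i ≤ s j) := by
  set A : ℕ → Fin n → ℝ := fun k j => a j + (j : ℕ) * (1 / ((k : ℝ) + 1)) with hA
  have hε : ∀ k : ℕ, (0 : ℝ) < 1 / ((k : ℝ) + 1) := fun k => by positivity
  have hAm : ∀ k, StrictMono (A k) := fun k i j hij => by
    have h1 : a i ≤ a j := ha hij.le
    have h2 : ((i : ℕ) : ℝ) < ((j : ℕ) : ℝ) := by exact_mod_cast hij
    have h3 := mul_lt_mul_of_pos_right h2 (hε k)
    simp only [hA]; linarith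
  have hAp : ∀ k j, 0 < A k j := fun k j => by
    have := hpos j
    have := hε k
    simp only [hA]; positivity
  have hAt : ∀ j, Filter.Tendsto (fun k => A k j) Filter.atTop (nhds (a j)) := fun j => by
    have h := (tendsto_one_div_add_atTop_nhds_zero_nat (𝕜 := ℝ)).const_mul ((j : ℕ) : ℝ)
    simpa [hA] using h.const_add (a j)
  have hAle : ∀ k j, A k j ≤ a j + (j : ℕ) := fun k j => by
    have h1 : 1 / ((k : ℝ) + 1) ≤ 1 := by
      rw [div_le_one (by positivity)]
      have : (0 : ℝ) ≤ k := Nat.cast_nonneg k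
      linarith
    have h2 := mul_le_mul_of_nonneg_left h1 (Nat.cast_nonneg (α := ℝ) (j : ℕ))
    simp only [hA]; linarith
  choose s hs0 hsf hsu hsl using fun k => exists_roots_of_strictMono_s3 hm hq (A k) (hAm k) (hAp k)
  obtain ⟨t, -, φ, hφ, ht⟩ := (isCompact_Icc (a := (0 : Fin n → ℝ))
      (b := fun j => a j + (j : ℕ))).tendsto_subseq (x := s)
    (fun k => ⟨fun j => hs0 k j, fun j => (hsu k j).trans (hAle k j)⟩)
  have ht' : ∀ j, Filter.Tendsto (fun k => s (φ k) j) Filter.atTop (nhds (t j)) :=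
    fun j => (tendsto_pi_nhds.mp ht) j
  have hA' : ∀ j, Filter.Tendsto (fun k => A (φ k) j) Filter.atTop (nhds (a j)) :=
    fun j => (hAt j).comp hφ.tendsto_atTop
  have hfac : rootS m q a = C ((q : ℝ) + m * n) * rootProd t := by
    refine Polynomial.funext fun x => ?_
    have hR : Filter.Tendsto (fun k => (C ((q : ℝ) + m * n) * rootProd (s (φ k))).eval x)
        Filter.atTop (nhds ((C ((q : ℝ) + m * n) * rootProd t).eval x)) := by
      simp only [eval_mul, eval_C, rootProd_eval]
      exact (tendsto_finsetProd _ fun j _ => (ht' j).const_sub x).const_mul _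
    have hL : Filter.Tendsto (fun k => (rootS m q (A (φ k))).eval x)
        Filter.atTop (nhds ((rootS m q a).eval x)) := by
      simp only [rootS_eval]
      exact ((tendsto_finsetProd _ fun j _ => (hA' j).const_sub x).const_mul _).add
        ((tendsto_finsetSum _ fun j _ =>
          tendsto_finsetProd _ fun k _ => (hA' k).const_sub x).const_mul _)
    simp only [hsf] at hL
    exact tendsto_nhds_unique hL hR
  refine ⟨t, fun j => ?_, hfac, fun j => ?_, fun i j hij => ?_⟩
  · refine lt_of_le_of_ne (ge_of_tendsto' (ht' j) fun k => hs0 _ j) fun h0 => ?_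
    -- A root at `0` would make `S 0 = q * Q 0` vanish.
    have h := congrArg (eval 0) hfac
    have ht0 : ∏ j, (0 - t j) = 0 :=
      Finset.prod_eq_zero (Finset.mem_univ j) (by rw [← h0, sub_self])
    rw [rootS_eval, eval_mul, rootProd_eval, ht0] at h
    have hq' : (q : ℝ) ≠ 0 := by positivity
    have hne : ∏ j, (0 - a j) ≠ 0 :=
      Finset.prod_ne_zero_iff.mpr fun j _ => by
        have := hpos j; intro h0; linarith
    simp only [mul_zero, zero_mul, add_zero] at h
    exact mul_ne_zero hq' hne h
  · exact le_of_tendsto_of_tendsto' (ht' j) (hA' j) fun k => hsu _ j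
  · exact le_of_tendsto_of_tendsto' (hA' i) (ht' j) fun k => hsl _ i j hij

lemma derivative_X_pow_mul_comp {m q : ℕ} (hm : 1 ≤ m) (hq : 1 ≤ q) (Q : ℝ[X]) :
    derivative (X ^ q * Q.comp (X ^ m)) =
      X ^ (q - 1) * (C (q : ℝ) * Q + C (m : ℝ) * X * derivative Q).comp (X ^ m) := by
  obtain ⟨q, rfl⟩ := Nat.exists_eq_add_of_le' hq
  obtain ⟨m, rfl⟩ := Nat.exists_eq_add_of_le' hm
  simp only [derivative_mul, derivative_X_pow, derivative_comp, add_comp, mul_comp, C_comp, X_comp,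
    Nat.add_sub_cancel]
  ring

/-- If `Q` has degree `n` with all roots real and positive, with
nondecreasing root sequence `qr`, and `P(z) = z^q Q(z^m)` with `q ≥ 1`, then
`P' (z) = z^(q-1) S(z^m)` where `S(X) = q·Q(X) + m·X·Q'(X)` has degree `n`, all roots of
`S` are real and positive, and the roots of `S` interlace between `0` and the roots of
`Q`: `qr_{j-1} ≤ s_j ≤ qr_j` (with the convention `qr_0 = 0`). -/
theorem stmt3 (n m q : ℕ) (hn : 1 ≤ n) (hm : 1 ≤ m) (hq : 1 ≤ q)
    (Q : Polynomial ℝ) (hQdeg : Q.natDegree = n)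
    (qr : Fin n → ℝ) (hqr : Monotone qr) (hqrpos : ∀ j, 0 < qr j)
    (hQfac : Q = C Q.leadingCoeff * ∏ j, (X - C (qr j)))
    (P : Polynomial ℝ) (hP : P = X ^ q * Q.comp (X ^ m))
    (S : Polynomial ℝ) (hS : S = C (q : ℝ) * Q + C (m : ℝ) * X * derivative Q) :
    derivative P = X ^ (q - 1) * S.comp (X ^ m) ∧ S.natDegree = n ∧
      ∃ s : Fin n → ℝ, Monotone s ∧ (∀ j, 0 < s j) ∧
        S = C S.leadingCoeff * ∏ j, (X - C (s j)) ∧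
        (∀ j, s j ≤ qr j) ∧
        (∀ i j : Fin n, (i : ℕ) + 1 = (j : ℕ) → qr i ≤ s j) := by
  obtain ⟨s, hs0, hsf, hsu, hsl⟩ := exists_roots_of_monotone hm hq qr hqr hqrpos
  have hlc : Q.leadingCoeff ≠ 0 := by
    rw [Ne, leadingCoeff_eq_zero]
    rintro rfl
    rw [natDegree_zero] at hQdeg
    omega
  set c := Q.leadingCoeff with hc
  have hd : c * ((q : ℝ) + m * n) ≠ 0 := mul_ne_zero hlc (by positivity)
  have hSf : S = C (c * ((q : ℝ) + m * n)) * rootProd s := by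
    rw [C_mul, mul_assoc, ← hsf, hS, hQfac]
    simp only [rootS, rootProd, derivative_C_mul]
    ring
  have hSlc : S.leadingCoeff = c * ((q : ℝ) + m * n) := by
    rw [hSf, leadingCoeff_mul, leadingCoeff_C, (rootProd_monic s).leadingCoeff, mul_one]
  refine ⟨?_, ?_, s, ?_, hs0, ?_, hsu, hsl⟩
  · rw [hP, hS]; exact derivative_X_pow_mul_comp hm hq Q
  · rw [hSf, natDegree_C_mul hd, rootProd_natDegree]
  · -- Monotonicity follows from the interlacing: `s i ≤ qr i ≤ qr (j - 1) ≤ s j` for `i < j`.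
    intro i j hij
    rcases hij.eq_or_lt with rfl | hlt
    · exact le_rfl
    · rw [Fin.lt_def] at hlt
      have hk : (j : ℕ) - 1 < n := by omega
      have hik : i ≤ (⟨(j : ℕ) - 1, hk⟩ : Fin n) := by
        rw [Fin.le_def]; exact Nat.le_sub_one_of_lt hlt
      exact (hsu i).trans ((hqr hik).trans (hsl ⟨(j : ℕ) - 1, hk⟩ j (Nat.sub_add_cancel (by omega))))
  · rw [hSlc]; exact hSf
end

section
/- Fix integers n, m ≥ 1. For q ≥ 1: the map sending a nondecreasing n-tuple (q_1, …, q_n) of positive reals (the roots, with multiplicity, of the monic polynomial Q(X) = Π_{j=1}^n (X − q_j)) to the nondecreasing sequence of roots of S(X) = q·Q(X) + m·X·Q'(X) is increasing for the componentwise partial order ≼: if q_j ≤ q'_j for all j, then the j-th smallest root of the corresponding S is at most the j-th smallest root of the S built from (q'_1, …, q'_n), for every 1 ≤ j ≤ n. For q = 0: the map sending (q_1, …, q_n) to the nondecreasing (n−1)-tuple of roots of Q' is increasing for the same partial order. -/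
/-!
Both cases concern the numerator `S` of a rational function `F(x) = ∑ⱼ wⱼ / (x - rⱼ)` with
positive weights and ordered nodes `r₀ ≤ … ≤ r_k`: the polynomial `q Q + m X Q'` comes from the
roots of `Q` with weight `m` and the extra node `0` with weight `q`, and `Q'` comes from the
roots of `Q` with weight `1`.

The ordered roots of `S` satisfy `rᵢ ≤ sᵢ ≤ rᵢ₊₁`, with both inequalities strict as soon as
`rᵢ < rᵢ₊₁` (`interlace`, `interlace_ordered`). For distinct nodes this is the intermediate value
theorem together with a degree count; coinciding nodes are merged one pair at a time, adding
their weights, which splits a linear factor off `S`.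

For monotonicity (`roots_mono`), let the nodes move from `r` to `r' ≥ r` and suppose `s'ᵢ < sᵢ`.
Then `rᵢ ≤ r'ᵢ < s'ᵢ < sᵢ < rᵢ₊₁ ≤ r'ᵢ₊₁`, so for each `j` the numbers `sᵢ - rⱼ > s'ᵢ - r'ⱼ` are
nonzero of the same sign, and `wⱼ / (sᵢ - rⱼ) < wⱼ / (s'ᵢ - r'ⱼ)`. Summing over `j` gives `0 < 0`,
because each side of the summed inequality is the value of the corresponding `F` at one of its
zeros.
-/

open Polynomial

/-- The numerator `∑ₐ wₐ ∏_{b ≠ a} (X - r_b)` of the rational function `∑ₐ wₐ / (X - rₐ)`.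
The factor `b = a` is replaced by `1`, so that the product runs over the whole index type. -/
noncomputable def weightedDeriv {N : ℕ} (r w : Fin N → ℝ) : ℝ[X] :=
  ∑ a, C (w a) * ∏ b, (if b = a then 1 else (X - C (r b)))

lemma eval_weightedDeriv {N : ℕ} (r w : Fin N → ℝ) (x : ℝ) :
    (weightedDeriv r w).eval x = ∑ a, w a * ∏ b, (if b = a then 1 else (x - r b)) := by
  simp only [weightedDeriv, eval_finsetSum, eval_mul, eval_C, eval_prod, apply_ite (eval x),
    eval_one, eval_sub, eval_X]

lemma eval_weightedDeriv_node {N : ℕ} (r w : Fin N → ℝ) (j : Fin N) :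
    (weightedDeriv r w).eval (r j) = w j * ∏ b, (if b = j then 1 else (r j - r b)) := by
  rw [eval_weightedDeriv]
  refine Finset.sum_eq_single j (fun a _ ha => ?_) (by simp)
  rw [Finset.prod_eq_zero (Finset.mem_univ j), mul_zero]
  rw [if_neg (Ne.symm ha), sub_self]

/-- Away from the nodes, a zero of `weightedDeriv r w` is a zero of `∑ₐ wₐ / (x - rₐ)`. -/
lemma sum_div_eq_zero {N : ℕ} (r w : Fin N → ℝ) (x : ℝ) (hx : ∀ j, x - r j ≠ 0)
    (h : (weightedDeriv r w).eval x = 0) : ∑ a, w a / (x - r a) = 0 := by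
  have key : (∏ b, (x - r b)) * ∑ a, w a / (x - r a) = 0 := by
    rw [← h, eval_weightedDeriv, Finset.mul_sum]
    refine Finset.sum_congr rfl fun a _ => ?_
    have : ∏ b, (x - r b) = (x - r a) * ∏ b, (if b = a then 1 else (x - r b)) := by
      rw [← Finset.mul_prod_erase _ _ (Finset.mem_univ a)]
      congr 1
      rw [← Finset.mul_prod_erase _ (fun b => if b = a then 1 else (x - r b)) (Finset.mem_univ a)]
      simp only [if_true, one_mul]
      refine Finset.prod_congr rfl fun b hb => ?_
      rw [if_neg (Finset.ne_of_mem_erase hb)]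
    rw [this]
    field_simp [hx a]
  exact (mul_eq_zero.mp key).resolve_left (Finset.prod_ne_zero_iff.mpr fun b _ => hx b)

lemma weightedDeriv_natDegree_le {k : ℕ} (r w : Fin (k + 1) → ℝ) :
    (weightedDeriv r w).natDegree ≤ k := by
  refine natDegree_sum_le_of_forall_le _ _ fun a _ => ?_
  refine (natDegree_C_mul_le _ _).trans ((natDegree_prod_le _ _).trans ?_)
  calc ∑ b, (if b = a then (1 : ℝ[X]) else (X - C (r b))).natDegree
      ≤ ∑ b, (if b = a then 0 else 1) := by
        refine Finset.sum_le_sum fun b _ => ?_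
        split_ifs <;> simp
    _ = k := by
        rw [Fin.sum_univ_succAbove _ a]
        simp [Fin.succAbove_ne]

/-- For strictly increasing nodes the sign of `weightedDeriv r w` changes between consecutive
nodes, so it has a zero in each of the `k` gaps, and these are all its roots. -/
lemma roots_of_strictMono {k : ℕ} (r w : Fin (k + 1) → ℝ) (hr : StrictMono r)
    (hw : ∀ j, 0 < w j) :
    ∃ t : Fin k → ℝ, (∀ i, r i.castSucc < t i ∧ t i < r i.succ) ∧
      (weightedDeriv r w).roots = Finset.univ.val.map t := by
  have hne : ∀ j, (weightedDeriv r w).eval (r j) ≠ 0 := by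
    intro j
    rw [eval_weightedDeriv_node]
    refine mul_ne_zero (hw j).ne' (Finset.prod_ne_zero_iff.mpr fun b _ => ?_)
    split_ifs with hb
    · exact one_ne_zero
    · exact sub_ne_zero.mpr fun h => hb (hr.injective h).symm
  have hsign : ∀ i : Fin k, (weightedDeriv r w).eval (r i.castSucc) *
      (weightedDeriv r w).eval (r i.succ) < 0 := by
    intro i
    have hlt : r i.castSucc < r i.succ := hr i.castSucc_lt_succ
    have hne' : i.castSucc ≠ i.succ := i.castSucc_lt_succ.ne
    rw [eval_weightedDeriv_node, eval_weightedDeriv_node, mul_mul_mul_comm,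
      ← Finset.prod_mul_distrib]
    refine mul_neg_of_pos_of_neg (mul_pos (hw _) (hw _)) ?_
    rw [← Finset.mul_prod_erase _ _ (Finset.mem_univ i.castSucc),
      ← Finset.mul_prod_erase _ _ (Finset.mem_erase.mpr ⟨hne'.symm, Finset.mem_univ i.succ⟩),
      ← mul_assoc]
    refine mul_neg_of_neg_of_pos ?_ (Finset.prod_pos fun b hb => ?_)
    · simp only [if_true, if_neg hne', if_neg hne'.symm, one_mul, mul_one]
      exact mul_neg_of_pos_of_neg (by linarith) (by linarith)
    · have h1 : b ≠ i.succ := Finset.ne_of_mem_erase hb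
      have h2 : b ≠ i.castSucc := Finset.ne_of_mem_erase (Finset.mem_of_mem_erase hb)
      rw [if_neg h1, if_neg h2]
      rcases lt_or_ge b i.castSucc with h | h
      · have := hr h
        exact mul_pos (by linarith) (by linarith)
      · have : i.succ < b := by
          have h3 : i.castSucc < b := lt_of_le_of_ne h h2.symm
          exact lt_of_le_of_ne (Fin.castSucc_lt_iff_succ_le.mp h3) h1.symm
        have := hr this
        exact mul_pos_of_neg_of_neg (by linarith) (by linarith)
  have hex : ∀ i : Fin k, ∃ t, (r i.castSucc < t ∧ t < r i.succ) ∧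
      (weightedDeriv r w).eval t = 0 := by
    intro i
    have hlt : r i.castSucc < r i.succ := hr i.castSucc_lt_succ
    have hc : ContinuousOn (fun x => (weightedDeriv r w).eval x)
      (Set.Icc (r i.castSucc) (r i.succ)) := (weightedDeriv r w).continuous.continuousOn
    rcases mul_neg_iff.mp (hsign i) with ⟨h1, h2⟩ | ⟨h1, h2⟩
    · obtain ⟨t, ht, h0⟩ := intermediate_value_Ioo' hlt.le hc ⟨h2, h1⟩
      exact ⟨t, ht, h0⟩
    · obtain ⟨t, ht, h0⟩ := intermediate_value_Ioo hlt.le hc ⟨h1, h2⟩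
      exact ⟨t, ht, h0⟩
  choose t ht h0 using hex
  refine ⟨t, ht, ?_⟩
  have hS : weightedDeriv r w ≠ 0 := by
    intro h
    apply hne 0
    rw [h, eval_zero]
  have hinj : Function.Injective t := by
    have : StrictMono t := by
      intro a b hab
      have : r a.succ ≤ r b.castSucc := hr.monotone (Fin.castSucc_lt_iff_succ_le.mp
        (Fin.castSucc_lt_castSucc_iff.mpr hab) )
      linarith [(ht a).2, (ht b).1]
    exact this.injective
  symm
  refine Multiset.eq_of_le_of_card_le ?_ ?_
  · refine (Multiset.le_iff_subset (Finset.univ.nodup.map hinj)).mpr fun x hx => ?_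
    obtain ⟨i, -, rfl⟩ := Multiset.mem_map.mp hx
    exact (mem_roots hS).mpr (h0 i)
  · simpa using (card_roots' _).trans (weightedDeriv_natDegree_le r w)

/-- Two nodes at the same place may be merged by adding their weights; this splits off one
linear factor of `weightedDeriv`. -/
lemma weightedDeriv_merge {k : ℕ} (r w : Fin (k + 1) → ℝ) (j : Fin (k + 1)) (i : Fin k)
    (hij : r (j.succAbove i) = r j) :
    weightedDeriv r w = (X - C (r j)) * weightedDeriv (fun a => r (j.succAbove a))
      (fun a => w (j.succAbove a) + if a = i then w j else 0) := by
  have hprod : ∏ b, (X - C (r (j.succAbove b))) =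
      (X - C (r j)) * ∏ b, (if b = i then 1 else (X - C (r (j.succAbove b)))) := by
    rw [← Finset.mul_prod_erase _ _ (Finset.mem_univ i), hij]
    congr 1
    rw [← Finset.mul_prod_erase _ (fun b => if b = i then (1 : ℝ[X]) else _) (Finset.mem_univ i)]
    simp only [if_true, one_mul]
    refine Finset.prod_congr rfl fun b hb => ?_
    rw [if_neg (Finset.ne_of_mem_erase hb)]
  have hsum : ∑ a, C (if a = i then w j else 0) *
        ∏ b, (if b = a then 1 else (X - C (r (j.succAbove b)))) =
      C (w j) * ∏ b, (if b = i then 1 else (X - C (r (j.succAbove b)))) := by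
    rw [Finset.sum_eq_single i (fun a _ ha => by simp [ha]) (by simp)]
    simp
  have hfirst : ∏ b, (if b = j then 1 else (X - C (r b))) =
      ∏ b, (X - C (r (j.succAbove b))) := by
    rw [Fin.prod_univ_succAbove _ j]
    simp only [if_true, one_mul, Fin.succAbove_ne, if_false]
  have hrest : ∀ a, ∏ b, (if b = j.succAbove a then 1 else (X - C (r b))) =
      (X - C (r j)) * ∏ b, (if b = a then 1 else (X - C (r (j.succAbove b)))) := by
    intro a
    rw [Fin.prod_univ_succAbove _ j, if_neg (Fin.succAbove_ne j a).symm]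
    simp only [Fin.succAbove_right_inj]
  unfold weightedDeriv
  rw [Fin.sum_univ_succAbove _ j, hfirst, hprod]
  simp only [hrest, C_add, add_mul, Finset.sum_add_distrib]
  rw [hsum, mul_add, Finset.mul_sum, add_comm]
  refine congrArg₂ (· + ·) (Finset.sum_congr rfl fun a _ => ?_) ?_
  · exact mul_left_comm _ _ _
  · exact mul_left_comm _ _ _

lemma countP_map_univ {k : ℕ} (t : Fin k → ℝ) (p : ℝ → Prop) [DecidablePred p] :
    (Finset.univ.val.map t).countP p = (Finset.univ.filter fun i => p (t i)).card := by
  rw [Multiset.countP_map]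
  rfl

/-- Interlacing with multiplicity, in counting form: at each node `x`, the roots of
`weightedDeriv r w` in `(-∞, x)` are as many as the nodes there, and those in `(-∞, x]` are
one fewer than the nodes there. Both counts survive the merging of coinciding nodes, since a
merge removes one node and one root at the same place. -/
lemma interlace_s4 {k : ℕ} (r w : Fin (k + 1) → ℝ) (hr : Monotone r) (hw : ∀ j, 0 < w j) :
    weightedDeriv r w ≠ 0 ∧ ∀ j,
      (weightedDeriv r w).roots.countP (· < r j) =
        (Finset.univ.val.map r).countP (· < r j) ∧
      (weightedDeriv r w).roots.countP (· ≤ r j) + 1 =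
        (Finset.univ.val.map r).countP (· ≤ r j) := by
  induction k with
  | zero =>
    have h1 : weightedDeriv r w = C (w 0) := by simp [weightedDeriv]
    rw [h1]
    refine ⟨by simpa using (hw 0).ne', fun j => ?_⟩
    rw [countP_map_univ, countP_map_univ, roots_C]
    have : j = 0 := Fin.fin_one_eq_zero j
    subst this
    have hall : ∀ i : Fin (0 + 1), r i = r 0 := fun i => congrArg r (Fin.fin_one_eq_zero i)
    simp [hall]
  | succ k ih =>
    by_cases hinj : Function.Injective r
    · have hs : StrictMono r := hr.strictMono_of_injective hinj
      refine ⟨?_, fun j => ?_⟩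
      · intro h
        have h2 := eval_weightedDeriv_node r w 0
        rw [h, eval_zero] at h2
        refine mul_ne_zero (hw 0).ne' (Finset.prod_ne_zero_iff.mpr fun b _ => ?_) h2.symm
        split_ifs with hb
        · exact one_ne_zero
        · exact sub_ne_zero.mpr fun h => hb (hinj h).symm
      · obtain ⟨t, ht, hroots⟩ := roots_of_strictMono r w hs hw
        have hlow : ∀ i : Fin (k + 1), i.castSucc < j → t i < r j := fun i hi =>
          (ht i).2.trans_le (hr (Fin.castSucc_lt_iff_succ_le.mp hi))
        have hhigh : ∀ i : Fin (k + 1), ¬ i.castSucc < j → r j < t i := fun i hi =>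
          (hr (not_lt.mp hi)).trans_lt (ht i).1
        have e1 : ∀ i, t i < r j ↔ i.castSucc < j := fun i =>
          ⟨fun h => by_contra fun h' => lt_asymm h (hhigh i h'), hlow i⟩
        have e2 : ∀ i, t i ≤ r j ↔ i.castSucc < j := fun i =>
          ⟨fun h => by_contra fun h' => (hhigh i h').not_ge h, fun h => (hlow i h).le⟩
        have hcard : (Finset.univ.filter fun i : Fin (k + 1) => i.castSucc < j).card = j := by
          have h3 : (Finset.univ.filter fun b : Fin (k + 2) => b < j).card = j := by
            rw [← Fin.card_Iio j]
            congr 1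
            ext b
            simp
          rw [Finset.card_filter, Fin.sum_univ_castSucc,
            if_neg (not_lt.mpr (Fin.le_last j)), add_zero, ← Finset.card_filter] at h3
          exact h3
        have hcard2 : (Finset.univ.filter fun b : Fin (k + 2) => b < j).card = j := by
          rw [← Fin.card_Iio j]
          congr 1
          ext b
          simp
        have hcard3 : (Finset.univ.filter fun b : Fin (k + 2) => b ≤ j).card = j + 1 := by
          rw [← Fin.card_Iic j]
          congr 1
          ext b
          simp
        rw [hroots]
        simp only [countP_map_univ, e1, e2, hs.lt_iff_lt, hs.le_iff_le, hcard, hcard2, hcard3,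
          and_self]
    · obtain ⟨j₀, j₁, hj, hne⟩ : ∃ a b, r a = r b ∧ a ≠ b := by
        simpa [Function.Injective] using hinj
      obtain ⟨i, rfl⟩ := Fin.exists_succAbove_eq hne
      have hmerge := weightedDeriv_merge r w j₁ i hj
      have hw' : ∀ a, 0 < w (j₁.succAbove a) + if a = i then w j₁ else 0 := by
        intro a
        have := hw (j₁.succAbove a)
        have := hw j₁
        split_ifs <;> linarith
      obtain ⟨h0, hI⟩ := ih (fun a => r (j₁.succAbove a)) _
        (hr.comp (Fin.strictMono_succAbove j₁).monotone) hw'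
      have hmul := mul_ne_zero (X_sub_C_ne_zero (r j₁)) h0
      refine ⟨by rw [hmerge]; exact hmul, fun j => ?_⟩
      -- The node `r j` is still present after the removal of index `j₁`.
      obtain ⟨a, ha⟩ : ∃ a, r (j₁.succAbove a) = r j := by
        by_cases h : j = j₁
        · exact ⟨i, by rw [h, hj]⟩
        · obtain ⟨a, rfl⟩ := Fin.exists_succAbove_eq h
          exact ⟨a, rfl⟩
      have hIa := hI a
      simp only [ha] at hIa
      have hR : (Finset.univ.val.map r) =
          r j₁ ::ₘ (Finset.univ.val.map fun a => r (j₁.succAbove a)) := by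
        rw [Fin.univ_succAbove _ j₁, Finset.cons_val, Multiset.map_cons, Finset.map_val,
          Multiset.map_map]
        rfl
      rw [hmerge, roots_mul hmul, roots_X_sub_C, hR, Multiset.singleton_add]
      simp only [Multiset.countP_cons]
      omega

lemma le_of_countP {k : ℕ} {s : Fin k → ℝ} (hs : Monotone s) {x : ℝ} {i : Fin k}
    (h : (i : ℕ) + 1 ≤ (Finset.univ.val.map s).countP (· ≤ x)) : s i ≤ x := by
  by_contra hc
  rw [countP_map_univ] at h
  have : (Finset.univ.filter fun b => s b ≤ x) ⊆ Finset.Iio i := by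
    intro b hb
    rw [Finset.mem_Iio]
    by_contra hb'
    exact hc ((hs (not_lt.mp hb')).trans (by simpa using hb))
  have := Finset.card_le_card this
  rw [Fin.card_Iio] at this
  omega

lemma lt_of_countP {k : ℕ} {s : Fin k → ℝ} (hs : Monotone s) {x : ℝ} {i : Fin k}
    (h : (i : ℕ) + 1 ≤ (Finset.univ.val.map s).countP (· < x)) : s i < x := by
  by_contra hc
  rw [countP_map_univ] at h
  have : (Finset.univ.filter fun b => s b < x) ⊆ Finset.Iio i := by
    intro b hb
    rw [Finset.mem_Iio]
    by_contra hb'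
    exact hc ((hs (not_lt.mp hb')).trans_lt (by simpa using hb))
  have := Finset.card_le_card this
  rw [Fin.card_Iio] at this
  omega

lemma countP_of_le {k : ℕ} {s : Fin k → ℝ} (hs : Monotone s) {x : ℝ} {i : Fin k}
    (h : s i ≤ x) : (i : ℕ) + 1 ≤ (Finset.univ.val.map s).countP (· ≤ x) := by
  rw [countP_map_univ, ← Fin.card_Iic i]
  refine Finset.card_le_card fun b hb => ?_
  simpa using (hs (Finset.mem_Iic.mp hb)).trans h

lemma countP_of_lt {k : ℕ} {s : Fin k → ℝ} (hs : Monotone s) {x : ℝ} {i : Fin k}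
    (h : s i < x) : (i : ℕ) + 1 ≤ (Finset.univ.val.map s).countP (· < x) := by
  rw [countP_map_univ, ← Fin.card_Iic i]
  refine Finset.card_le_card fun b hb => ?_
  simpa using (hs (Finset.mem_Iic.mp hb)).trans_lt h

/-- Interlacing for the ordered roots `s`, strict in every nondegenerate gap between nodes. -/
lemma interlace_ordered {k : ℕ} (r w : Fin (k + 1) → ℝ) (hr : Monotone r) (hw : ∀ j, 0 < w j)
    (s : Fin k → ℝ) (hs : Monotone s) (c : ℝ)
    (h : weightedDeriv r w = C c * ∏ i, (X - C (s i))) (i : Fin k) :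
    r i.castSucc ≤ s i ∧ s i ≤ r i.succ ∧ (weightedDeriv r w).eval (s i) = 0 ∧
      (r i.castSucc < r i.succ → r i.castSucc < s i ∧ s i < r i.succ) := by
  obtain ⟨h0, hI⟩ := interlace_s4 r w hr hw
  have hc : c ≠ 0 := by
    rintro rfl
    simp [h] at h0
  have hroots : (weightedDeriv r w).roots = Finset.univ.val.map s := by
    rw [h, roots_C_mul _ hc]
    exact roots_multiset_prod_X_sub_C (Finset.univ.val.map s) ▸ by
      rw [Multiset.map_map]; rfl
  rw [hroots] at hI
  obtain ⟨a1, a2⟩ := hI i.castSucc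
  obtain ⟨b1, b2⟩ := hI i.succ
  refine ⟨?_, ?_, ?_, fun hlt => ⟨?_, ?_⟩⟩
  · by_contra hcon
    have h1 := countP_of_lt hs (not_le.mp hcon)
    rw [a1] at h1
    exact lt_irrefl _ (lt_of_countP hr (i := i.castSucc) (by simpa using h1))
  · apply le_of_countP hs
    have := countP_of_le hr (le_refl (r i.succ))
    rw [Fin.val_succ] at this
    omega
  · rw [h, eval_mul, eval_prod, Finset.prod_eq_zero (Finset.mem_univ i), mul_zero]
    simp
  · by_contra hcon
    have h1 := countP_of_le hs (not_lt.mp hcon)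
    have h2 := le_of_countP hr (x := r i.castSucc) (i := i.succ) (by rw [Fin.val_succ]; omega)
    linarith
  · apply lt_of_countP hs
    rw [b1]
    simpa using countP_of_lt hr hlt

/-- Moving the nodes to the right, with fixed weights, moves the ordered roots to the right. -/
lemma roots_mono {k : ℕ} (r r' w : Fin (k + 1) → ℝ) (hr : Monotone r) (hr' : Monotone r')
    (hw : ∀ j, 0 < w j) (hrr : ∀ j, r j ≤ r' j)
    (s s' : Fin k → ℝ) (hs : Monotone s) (hs' : Monotone s') (c : ℝ)
    (h : weightedDeriv r w = C c * ∏ i, (X - C (s i)))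
    (h' : weightedDeriv r' w = C c * ∏ i, (X - C (s' i))) (i : Fin k) : s i ≤ s' i := by
  by_contra! hlt
  obtain ⟨p1, p2, p3, p4⟩ := interlace_ordered r w hr hw s hs c h i
  obtain ⟨q1, q2, q3, q4⟩ := interlace_ordered r' w hr' hw s' hs' c h' i
  have l1 := hrr i.castSucc
  have l2 := hrr i.succ
  obtain ⟨u1, u2⟩ := p4 (by linarith)
  obtain ⟨v1, v2⟩ := q4 (by linarith)
  -- No node changes side: index by index, `s i - r j` and `s' i - r' j` have the same sign.
  have hterm : ∀ j, s i - r j ≠ 0 ∧ s' i - r' j ≠ 0 ∧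
      w j / (s i - r j) < w j / (s' i - r' j) := by
    intro j
    have := hrr j
    rcases le_or_gt j i.castSucc with hj | hj
    · have g2 := hr' hj
      have e1 : 0 < s' i - r' j := by linarith
      have e2 : s' i - r' j < s i - r j := by linarith
      exact ⟨(e1.trans e2).ne', e1.ne', div_lt_div_of_pos_left (hw j) e1 e2⟩
    · have g1 := hr (Fin.castSucc_lt_iff_succ_le.mp hj)
      have e1 : s i - r j < 0 := by linarith
      have e2 : s' i - r' j < s i - r j := by linarith
      refine ⟨e1.ne, (e2.trans e1).ne, ?_⟩
      have := div_lt_div_of_pos_left (hw j) (neg_pos.mpr e1) (neg_lt_neg e2)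
      rw [div_neg, div_neg] at this
      linarith
  have z1 := sum_div_eq_zero r w (s i) (fun j => (hterm j).1) p3
  have z2 := sum_div_eq_zero r' w (s' i) (fun j => (hterm j).2.1) q3
  have := Finset.sum_lt_sum_of_nonempty (Finset.univ_nonempty (α := Fin (k + 1)))
    (fun j _ => (hterm j).2.2)
  rw [z1, z2] at this
  exact lt_irrefl _ this

lemma derivative_prod_eq {n : ℕ} (r : Fin n → ℝ) :
    derivative (∏ j, (X - C (r j))) =
      ∑ a, ∏ b, (if b = a then 1 else (X - C (r b))) := by
  rw [derivative_prod_finset]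
  refine Finset.sum_congr rfl fun a _ => ?_
  rw [derivative_X_sub_C, mul_one,
    ← Finset.mul_prod_erase _ (fun b => if b = a then (1 : ℝ[X]) else _) (Finset.mem_univ a)]
  simp only [if_true, one_mul]
  refine Finset.prod_congr rfl fun b hb => ?_
  rw [if_neg (Finset.ne_of_mem_erase hb)]

/-- `q Q + m X Q'` is the weighted derivative of `X Q`, with weight `q` at the node `0` and
weight `m` at the roots of `Q`. -/
lemma weightedDeriv_cons {n : ℕ} (r : Fin n → ℝ) (q m : ℝ) :
    weightedDeriv (Fin.cons 0 r : Fin (n + 1) → ℝ) (Fin.cons q fun _ => m) =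
      C q * ∏ j, (X - C (r j)) + C m * X * derivative (∏ j, (X - C (r j))) := by
  rw [derivative_prod_eq, weightedDeriv, Fin.sum_univ_succ]
  simp [Fin.prod_univ_succ, Fin.succ_ne_zero, (Fin.succ_ne_zero _).symm, Finset.mul_sum, mul_assoc]

lemma monotone_cons {n : ℕ} (r : Fin n → ℝ) (hr : Monotone r) (h : ∀ j, 0 < r j) :
    Monotone (Fin.cons 0 r : Fin (n + 1) → ℝ) := by
  intro a b hab
  induction a using Fin.cases with
  | zero =>
    induction b using Fin.cases with
    | zero => simp
    | succ b => simpa using (h b).le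
  | succ a =>
    induction b using Fin.cases with
    | zero => simp at hab
    | succ b => simpa using hr (Fin.succ_le_succ_iff.mp hab)

/-- For fixed `n, m ≥ 1`: for `q ≥ 1`, the map sending a nondecreasing
tuple `(q_1,…,q_n)` of positive reals (roots of the monic `Q(X) = Π (X - q_j)`) to the
nondecreasing root sequence of `S(X) = q·Q(X) + m·X·Q'(X)` (a polynomial with leading
coefficient `q + m·n`) is increasing for the componentwise partial order; and for `q = 0`,
the map to the nondecreasing root sequence of `Q'` (leading coefficient `n`) is increasing
for the same order. -/
theorem stmt4 (n m : ℕ) (hn : 1 ≤ n) (hm : 1 ≤ m) :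
    (∀ q : ℕ, 1 ≤ q →
      ∀ r r' : Fin n → ℝ, Monotone r → Monotone r' →
      (∀ j, 0 < r j) → (∀ j, 0 < r' j) → (∀ j, r j ≤ r' j) →
      ∀ s s' : Fin n → ℝ, Monotone s → Monotone s' →
      (C (q : ℝ) * ∏ j, (X - C (r j)) + C (m : ℝ) * X * derivative (∏ j, (X - C (r j)))
        = C ((q : ℝ) + m * n) * ∏ i, (X - C (s i))) →
      (C (q : ℝ) * ∏ j, (X - C (r' j)) + C (m : ℝ) * X * derivative (∏ j, (X - C (r' j)))
        = C ((q : ℝ) + m * n) * ∏ i, (X - C (s' i))) →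
      ∀ j, s j ≤ s' j)
    ∧
    (∀ r r' : Fin n → ℝ, Monotone r → Monotone r' →
      (∀ j, 0 < r j) → (∀ j, 0 < r' j) → (∀ j, r j ≤ r' j) →
      ∀ u u' : Fin (n - 1) → ℝ, Monotone u → Monotone u' →
      (derivative (∏ j, (X - C (r j))) = C (n : ℝ) * ∏ i, (X - C (u i))) →
      (derivative (∏ j, (X - C (r' j))) = C (n : ℝ) * ∏ i, (X - C (u' i))) →
      ∀ i, u i ≤ u' i) := by
  constructor
  · intro q hq r r' hr hr' hp hp' hrr s s' hs hs' h h'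
    rw [← weightedDeriv_cons] at h h'
    refine roots_mono _ _ _ (monotone_cons r hr hp) (monotone_cons r' hr' hp') ?_ ?_
      s s' hs hs' _ h h'
    · intro j
      induction j using Fin.cases with
      | zero => simpa using Nat.pos_of_ne_zero (by omega)
      | succ j => simpa using Nat.pos_of_ne_zero (by omega)
    · intro j
      induction j using Fin.cases with
      | zero => simp
      | succ j => simpa using hrr j
  · obtain ⟨k, rfl⟩ : ∃ k, n = k + 1 := ⟨n - 1, by omega⟩
    intro r r' hr hr' _ _ hrr u u' hu hu' h h'
    have hd : ∀ r : Fin (k + 1) → ℝ,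
        derivative (∏ j, (X - C (r j))) = weightedDeriv r fun _ => 1 := by
      intro r
      rw [derivative_prod_eq, weightedDeriv]
      simp
    rw [hd] at h h'
    exact roots_mono r r' _ hr hr' (fun _ => one_pos) hrr u u' hu hu' _ h h'
end

section
/- Let n, m ≥ 1 be integers, let (r_j)_{1 ≤ j ≤ n} be a strictly increasing sequence of positive reals, and set α = max_{1 ≤ j ≤ n−1} r_j/r_{j+1} (so α < 1). Let Q be a real polynomial of degree n with all roots real and positive such that, for 1 ≤ j ≤ n, the j-th smallest root of Q (with multiplicity) is at most r_j. Then for every integer q with 1 ≤ q ≤ m−1 and every 1 ≤ j ≤ n, the j-th smallest root of S(X) = q·Q(X) + m·X·Q'(X) is at most r_j and also at most j·r_j/((j+1)(1 − α)). For q = 0 and 2 ≤ j ≤ n, the (j−1)-th smallest root of Q' is at most r_j and also at most j·r_j/((j+1)(1 − α)). -/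
open Polynomial

/-!
Put `S = a Q + b X Q'` with `0 ≤ a ≤ b` and `0 < b`. Away from the roots of `Q` one has
`S = Q F` with `F(x) = a + b ∑ x / (x - ρ_i)`. The signs of `S` and `Q` at `x` are governed by the
number of their roots to the right of `x`, so the sign of `F(x)` compares these two numbers
modulo `2`.

* `root_le` (`s_j ≤ ρ_j`) is a strong induction on `j`. With `v = ρ_j`, the function `F` tends to
  `-∞` at `v` from the left, so the numbers of roots of `S` and of `Q` smaller than `v` have
  opposite parity; the first is at least the second by induction, hence exceeds it by at least one.
  The multiplicity of `v` in `S` is at least that in `Q` minus one, so `S` has at least as many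
  roots in `(-∞, v]` as `Q`.
* `root_le_bound`: let `T = J r_j / ((J + 1)(1 - α))` with `J` the rank of `j` counted from one. If
  `T < s_j ≤ ρ_j`, then `S` and `Q` have the same number of roots to the right of `T`, so
  `F(T) > 0`. With `K = 1 / (1 - (J + 1) α)`, each of the `J - 1` terms with `i < j` is at most `K`,
  the `j`-th term is at most `-J K` and the remaining ones are negative, so
  `F(T) ≤ a - b K ≤ 0`, a contradiction.

The case of `Q'` is the case `a = 0`, `b = 1`: the roots of `X Q'` are `0` followed by those
of `Q'`.
-/

open Filter Topology Finset

theorem prod_sub_sign {n : ℕ} (s : Fin n → ℝ) (x : ℝ) (h : ∀ i, x ≠ s i) :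
    0 < (∏ i, (x - s i)) * (-1) ^ #{i | x < s i} := by
  have h1 : ((-1 : ℝ)) ^ #{i | x < s i} = ∏ i, (if x < s i then (-1 : ℝ) else 1) := by
    rw [Finset.prod_ite]; simp
  rw [h1, ← Finset.prod_mul_distrib]
  refine Finset.prod_pos fun i _ => ?_
  split_ifs with hi
  · linarith
  · have := lt_of_le_of_ne (not_lt.1 hi) (h i).symm
    linarith

/-- `S = Q F` away from the roots of `Q`, where `F(x) = a + b ∑ x / (x - ρ_i)`. -/
theorem eval_S {n : ℕ} (a b l : ℝ) (ρ : Fin n → ℝ) (Q : ℝ[X])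
    (hQ : Q = C l * ∏ j, (X - C (ρ j))) (x : ℝ) (h : ∀ i, x ≠ ρ i) :
    (C a * Q + C b * X * derivative Q).eval x
      = (l * ∏ i, (x - ρ i)) * (a + b * ∑ i, x / (x - ρ i)) := by
  have h2 : (derivative Q).eval x = (l * ∏ i, (x - ρ i)) * ∑ i, 1 / (x - ρ i) := by
    rw [hQ, derivative_C_mul, derivative_prod_finset]
    simp only [eval_mul, eval_C, eval_finsetSum, eval_prod, eval_sub, eval_X, derivative_sub,
      derivative_X, derivative_C, sub_zero, mul_one]
    rw [mul_assoc, Finset.mul_sum Finset.univ _ (∏ i, (x - ρ i))]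
    congr 1
    refine Finset.sum_congr rfl fun i _ => ?_
    rw [← Finset.mul_prod_erase Finset.univ (fun i => x - ρ i) (Finset.mem_univ i)]
    have := sub_ne_zero.2 (h i)
    field_simp
  have h3 : Q.eval x = l * ∏ i, (x - ρ i) := by
    rw [hQ]; simp [eval_prod]
  have h4 : ∑ i, x / (x - ρ i) = x * ∑ i, 1 / (x - ρ i) := by
    rw [Finset.mul_sum]; simp [div_eq_mul_inv]
  simp only [eval_add, eval_mul, eval_C, eval_X, h2, h3, h4]
  ring

theorem coeff_prod_lin {n : ℕ} (s : Fin n → ℝ) : (∏ i, (X - C (s i))).coeff n = 1 := by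
  have h1 : (∏ i, (X - C (s i))).natDegree = n := by
    rw [natDegree_prod_of_monic _ _ fun i _ => monic_X_sub_C _]; simp
  have h2 := (monic_prod_of_monic Finset.univ (fun i => X - C (s i))
    fun i _ => monic_X_sub_C _).coeff_natDegree
  rwa [h1] at h2

theorem lead_S {n : ℕ} (a b l L : ℝ) (ρ s : Fin n → ℝ) (Q : ℝ[X])
    (hQ : Q = C l * ∏ j, (X - C (ρ j)))
    (hS : C a * Q + C b * X * derivative Q = C L * ∏ j, (X - C (s j))) :
    L = (a + b * n) * l := by
  have h := congrArg (fun p => p.coeff n) hS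
  have hq : Q.coeff n = l := by rw [hQ, coeff_C_mul, coeff_prod_lin, mul_one]
  simp only [coeff_add, coeff_C_mul, mul_assoc, coeff_prod_lin, hq, mul_one] at h
  rw [← h]
  cases n with
  | zero => simp
  | succ k =>
    rw [coeff_X_mul, coeff_derivative, hq]
    push_cast
    ring

/-- The sign of `F` compares, modulo `2`, the numbers of roots of `S` and `Q` right of `x`. -/
theorem F_sign {n : ℕ} (hn : 1 ≤ n) (a b l L : ℝ) (ha : 0 ≤ a) (hb : 0 < b) (hl : l ≠ 0)
    (ρ s : Fin n → ℝ) (Q : ℝ[X])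
    (hQ : Q = C l * ∏ j, (X - C (ρ j)))
    (hS : C a * Q + C b * X * derivative Q = C L * ∏ j, (X - C (s j)))
    (x : ℝ) (hx : ∀ i, x ≠ ρ i) (hxs : ∀ i, x ≠ s i) :
    0 < (a + b * ∑ i, x / (x - ρ i)) * (-1) ^ (#{i | x < ρ i} + #{i | x < s i}) := by
  have h1 := eval_S a b l ρ Q hQ x hx
  have hL := lead_S a b l L ρ s Q hQ hS
  rw [hS] at h1
  simp only [eval_mul, eval_C, eval_prod, eval_sub, eval_X] at h1
  have p1 := prod_sub_sign ρ x hx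
  have p2 := prod_sub_sign s x hxs
  set P := ∏ i, (x - ρ i)
  set R := ∏ i, (x - s i)
  set F := a + b * ∑ i, x / (x - ρ i)
  have hP : P ≠ 0 := left_ne_zero_of_mul p1.ne'
  have hn' : (1 : ℝ) ≤ n := by exact_mod_cast hn
  have hk : 0 < a + b * n := by positivity
  have e : (a + b * n) * R = P * F := by
    apply mul_left_cancel₀ hl
    rw [hL] at h1
    linarith
  rw [pow_add]
  set u : ℝ := (-1) ^ #{i | x < ρ i}
  set w : ℝ := (-1) ^ #{i | x < s i}
  have h3 : 0 < P ^ 2 * (F * (u * w)) := by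
    have : P ^ 2 * (F * (u * w)) = (a + b * n) * ((P * u) * (R * w)) := by
      linear_combination (-(P * u * w)) * e
    rw [this]
    positivity
  exact pos_of_mul_pos_right h3 (by positivity)

/-- `F` is negative just to the left of a positive root `v` of `Q`. -/
theorem F_neg_left {n : ℕ} (a b : ℝ) (hb : 0 < b) (ρ : Fin n → ℝ) (j : Fin n) (hv : 0 < ρ j) :
    ∀ᶠ x in 𝓝[<] (ρ j), a + b * ∑ i, x / (x - ρ i) < 0 := by
  set v := ρ j with hvdef
  have t0 : Tendsto (fun x : ℝ => x - v) (𝓝[<] v) (𝓝[<] 0) := by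
    refine tendsto_nhdsWithin_iff.2 ⟨?_, ?_⟩
    · have : Tendsto (fun x : ℝ => x - v) (𝓝 v) (𝓝 (v - v)) := (continuous_sub_right v).tendsto v
      rw [sub_self] at this
      exact this.mono_left nhdsWithin_le_nhds
    · filter_upwards [self_mem_nhdsWithin] with x hx
      simpa using hx
  have t1 : Tendsto (fun x : ℝ => x / (x - v)) (𝓝[<] v) atBot := by
    have : Tendsto (fun x : ℝ => x) (𝓝[<] v) (𝓝 v) := tendsto_id.mono_left nhdsWithin_le_nhds
    simp only [div_eq_mul_inv]
    exact this.pos_mul_atBot hv (tendsto_inv_nhdsLT_zero.comp t0)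
  set g : ℝ → ℝ := fun x => ∑ i, if ρ i = v then 0 else x / (x - ρ i)
  have tg : Tendsto g (𝓝[<] v) (𝓝 (g v)) := by
    refine Tendsto.mono_left ?_ nhdsWithin_le_nhds
    refine tendsto_finsetSum _ fun i _ => ?_
    split_ifs with h
    · exact tendsto_const_nhds
    · exact tendsto_id.div (tendsto_id.sub tendsto_const_nhds) (sub_ne_zero.2 (Ne.symm h))
  have t2 : Tendsto (fun x => g x + x / (x - v)) (𝓝[<] v) atBot := tg.add_atBot t1
  filter_upwards [t2.eventually (eventually_lt_atBot (-a / b)), self_mem_nhdsWithin,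
    mem_nhdsWithin_of_mem_nhds (lt_mem_nhds hv)] with x h1 h2 h3
  have h2' : x < v := h2
  have hle : ∑ i, x / (x - ρ i) ≤ g x + x / (x - v) := by
    have e : g x + x / (x - v)
        = ∑ i, ((if ρ i = v then 0 else x / (x - ρ i)) + if i = j then x / (x - v) else 0) := by
      rw [Finset.sum_add_distrib]; simp [g]
    rw [e]
    refine Finset.sum_le_sum fun i _ => ?_
    have hneg : x / (x - v) < 0 := div_neg_of_pos_of_neg h3 (by linarith)
    by_cases hi : i = j
    · subst hi; simp [hvdef]
    · by_cases h : ρ i = v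
      · simp [hi, h, hneg.le]
      · simp [hi, h]
  have h4 : ∑ i, x / (x - ρ i) < -a / b := hle.trans_lt h1
  rw [lt_div_iff₀ hb] at h4
  linarith

theorem rootMultiplicity_prod {n : ℕ} (l : ℝ) (hl : l ≠ 0) (s : Fin n → ℝ) (v : ℝ) :
    (C l * ∏ i, (X - C (s i))).rootMultiplicity v = #{i | s i = v} := by
  have h0 : ∏ i, (X - C (s i)) ≠ 0 := Finset.prod_ne_zero_iff.2 fun i _ => X_sub_C_ne_zero _
  rw [← count_roots, roots_C_mul _ hl, roots_prod _ _ h0]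
  simp only [roots_X_sub_C, Multiset.count_bind, Multiset.count_singleton]
  rw [Finset.card_filter]
  simp only [eq_comm]
  rfl

/-- The multiplicity of `v` as a root drops by at most one from `Q` to `S`. -/
theorem mult_le {n : ℕ} (hn : 1 ≤ n) (a b l L : ℝ) (ha : 0 ≤ a) (hb : 0 < b) (hl : l ≠ 0)
    (ρ s : Fin n → ℝ) (Q : ℝ[X])
    (hQ : Q = C l * ∏ j, (X - C (ρ j)))
    (hS : C a * Q + C b * X * derivative Q = C L * ∏ j, (X - C (s j))) (v : ℝ) :
    #{i | ρ i = v} ≤ #{i | s i = v} + 1 := by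
  have hL := lead_S a b l L ρ s Q hQ hS
  have hn' : (1 : ℝ) ≤ n := by exact_mod_cast hn
  have hk : 0 < a + b * n := by positivity
  have hL0 : L ≠ 0 := by rw [hL]; exact mul_ne_zero hk.ne' hl
  rw [← rootMultiplicity_prod l hl, ← rootMultiplicity_prod L hL0, ← hS, ← hQ,
    ← Nat.sub_le_iff_le_add]
  have hd := pow_rootMultiplicity_dvd Q v
  have h0 : C a * Q + C b * X * derivative Q ≠ 0 := by
    rw [hS]
    exact mul_ne_zero (C_ne_zero.2 hL0) (Finset.prod_ne_zero_iff.2 fun i _ => X_sub_C_ne_zero _)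
  rw [le_rootMultiplicity_iff h0]
  refine dvd_add (Dvd.dvd.mul_left ?_ _) (Dvd.dvd.mul_left ?_ _)
  · exact (pow_dvd_pow _ (Nat.sub_le _ _)).trans hd
  · exact pow_sub_one_dvd_derivative_of_pow_dvd hd

theorem root_le {n : ℕ} (hn : 1 ≤ n) (a b l L : ℝ) (ha : 0 ≤ a) (hb : 0 < b) (hl : l ≠ 0)
    (ρ s : Fin n → ℝ) (hρ : Monotone ρ) (hρpos : ∀ i, 0 < ρ i) (hs : Monotone s) (Q : ℝ[X])
    (hQ : Q = C l * ∏ j, (X - C (ρ j)))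
    (hS : C a * Q + C b * X * derivative Q = C L * ∏ j, (X - C (s j))) (j : Fin n) :
    s j ≤ ρ j := by
  induction j using WellFoundedLT.induction with
  | ind j ih =>
  set v := ρ j with hv
  have hsub : #{i | ρ i < v} ≤ #{i | s i < v} := by
    refine Finset.card_le_card fun i hi => ?_
    simp only [Finset.mem_filter, Finset.mem_univ, true_and] at hi ⊢
    exact (ih i (hρ.reflect_lt hi)).trans_lt hi
  -- a point left of `v` with no root of `S` or `Q` in `[x, v)`
  have ev : ∀ t : Fin n → ℝ, ∀ᶠ x in 𝓝[<] v, ∀ i, t i < v → t i < x := fun t => by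
    refine eventually_all.2 fun i => ?_
    by_cases h : t i < v
    · filter_upwards [mem_nhdsWithin_of_mem_nhds (lt_mem_nhds h)] with x hx _ using hx
    · exact Eventually.of_forall fun x h' => absurd h' h
  obtain ⟨x, h1, h2, h3, h4⟩ := ((F_neg_left a b hb ρ j (hρpos j)).and
    ((ev ρ).and ((ev s).and self_mem_nhdsWithin))).exists
  have h4' : x < v := h4
  have key : ∀ t : Fin n → ℝ, (∀ i, t i < v → t i < x) →
      (∀ i, x ≠ t i) ∧ #{i | x < t i} + #{i | t i < v} = n := fun t ht => by
    have hne : ∀ i, x ≠ t i := fun i h => by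
      have := ht i (h ▸ h4'); exact absurd h this.ne'
    refine ⟨hne, ?_⟩
    have e : (Finset.univ.filter fun i => x < t i) = Finset.univ.filter fun i => ¬ t i < v := by
      refine Finset.filter_congr fun i _ => ⟨fun h h' => (ht i h').not_gt h, fun h => ?_⟩
      exact h4'.trans_le (not_lt.1 h)
    rw [e, add_comm, Finset.card_filter_add_card_filter_not]
    simp
  obtain ⟨hxρ, c1⟩ := key ρ h2
  obtain ⟨hxs, c2⟩ := key s h3
  have hF := F_sign hn a b l L ha hb hl ρ s Q hQ hS x hxρ hxs
  have hodd : ¬ Even (#{i | x < ρ i} + #{i | x < s i}) := fun h => by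
    rw [h.neg_one_pow, mul_one] at hF
    linarith
  have hlt : #{i | ρ i < v} + 1 ≤ #{i | s i < v} := by
    rcases hsub.lt_or_eq with h | h
    · exact h
    · exact absurd ⟨#{i | x < ρ i}, by omega⟩ hodd
  have hm := mult_le hn a b l L ha hb hl ρ s Q hQ hS v
  have split : ∀ t : Fin n → ℝ, #{i | t i ≤ v} = #{i | t i < v} + #{i | t i = v} := fun t => by
    rw [← Finset.card_union_of_disjoint, ← Finset.filter_or]
    · simp only [le_iff_lt_or_eq]
    · exact Finset.disjoint_filter.2 fun i _ h h' => h.ne h'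
  have c3 : (j : ℕ) + 1 ≤ #{i | ρ i ≤ v} := by
    rw [← Fin.card_Iic]
    refine Finset.card_le_card fun i hi => ?_
    simpa using hρ (Finset.mem_Iic.1 hi)
  by_contra hcon
  have c4 : #{i | s i ≤ v} ≤ (j : ℕ) := by
    rw [← Fin.card_Iio]
    refine Finset.card_le_card fun i hi => ?_
    simp only [Finset.mem_filter, Finset.mem_univ, true_and] at hi
    exact Finset.mem_Iio.2 (hs.reflect_lt (hi.trans_lt (not_le.1 hcon)))
  have := split ρ
  have := split s
  omega

theorem root_le_bound {n : ℕ} (hn : 1 ≤ n) (a b l L : ℝ) (ha : 0 ≤ a) (hab : a ≤ b) (hb : 0 < b)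
    (hl : l ≠ 0)
    (ρ s r : Fin n → ℝ) (hρ : Monotone ρ) (hρpos : ∀ i, 0 < ρ i) (hs : Monotone s) (Q : ℝ[X])
    (hQ : Q = C l * ∏ j, (X - C (ρ j)))
    (hS : C a * Q + C b * X * derivative Q = C L * ∏ j, (X - C (s j)))
    (hrpos : ∀ j, 0 < r j) (hub : ∀ j, ρ j ≤ r j) (α : ℝ) (hα0 : 0 < α) (hα1 : α < 1)
    (hrα : ∀ i j, i < j → r i ≤ α * r j) (j : Fin n) :
    s j ≤ ((j : ℕ) + 1 : ℝ) * r j / ((((j : ℕ) + 2 : ℝ)) * (1 - α)) := by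
  have hle := root_le hn a b l L ha hb hl ρ s hρ hρpos hs Q hQ hS
  set J : ℝ := (j : ℕ) + 1 with hJ
  have hJ1 : 1 ≤ J := by rw [hJ]; linarith [(Nat.cast_nonneg (j : ℕ) : (0 : ℝ) ≤ (j : ℕ))]
  have hJ2 : ((j : ℕ) + 2 : ℝ) = J + 1 := by rw [hJ]; ring
  rw [hJ2]
  have hR := hrpos j
  have hRub := hub j
  set R := r j
  set T := J * R / ((J + 1) * (1 - α)) with hT
  have hden : 0 < (J + 1) * (1 - α) := by
    have : 0 < 1 - α := by linarith
    positivity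
  have hTeq : T * ((J + 1) * (1 - α)) = J * R := div_mul_cancel₀ _ hden.ne'
  have hT0 : 0 < T := by positivity
  by_contra hcon
  push Not at hcon
  have hTρ : T < ρ j := hcon.trans_le (hle j)
  have hTR : T < R := hTρ.trans_le hRub
  set β := (J + 1) * α with hβ
  have hβ1 : β < 1 := by
    have : J * R < R * ((J + 1) * (1 - α)) := by
      rw [← hTeq]; exact mul_lt_mul_of_pos_right hTR hden
    have : J < (J + 1) * (1 - α) := by
      refine lt_of_mul_lt_mul_left ?_ hR.le
      linarith
    rw [hβ]; linarith
  have hβ0 : 0 < β := by positivity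
  have hTβ : α * R ≤ T * β := by
    -- `T β = J α R / (1 - α)`
    have e : T * β * (1 - α) = J * (α * R) := by rw [hβ]; linear_combination α * hTeq
    have p : 0 < α * R := by positivity
    have q : 0 < T * β := by positivity
    nlinarith
  have hlow : ∀ i, i < j → ρ i ≤ T * β := fun i hi => ((hub i).trans (hrα i j hi)).trans hTβ
  have hTβT : T * β < T := by nlinarith
  have hlow' : ∀ i, i < j → ρ i < T := fun i hi => (hlow i hi).trans_lt hTβT
  have hρcase : ∀ i, j ≤ i → T < ρ i := fun i hi => hTρ.trans_le (hρ hi)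
  have hscase : ∀ i, j ≤ i → T < s i := fun i hi => hcon.trans_le (hs hi)
  have hs' : ∀ i, i < j → s i < T := fun i hi => (hle i).trans_lt (hlow' i hi)
  have hF := F_sign hn a b l L ha hb hl ρ s Q hQ hS T
    (fun i => (lt_or_ge i j).elim (fun h => (hlow' i h).ne') fun h => (hρcase i h).ne)
    (fun i => (lt_or_ge i j).elim (fun h => (hs' i h).ne') fun h => (hscase i h).ne)
  have hcount : #{i | T < ρ i} = #{i | T < s i} := by
    congr 1
    refine Finset.filter_congr fun i _ => ?_
    rcases lt_or_ge i j with h | h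
    · exact iff_of_false (hlow' i h).not_gt (hs' i h).not_gt
    · exact iff_of_true (hρcase i h) (hscase i h)
  rw [hcount, Even.neg_one_pow ⟨_, rfl⟩, mul_one] at hF
  set K := 1 / (1 - β) with hK
  have hβ' : 0 < 1 - β := by linarith
  have hK1 : 1 ≤ K := by rw [hK, le_div_iff₀ hβ']; linarith
  have hsum : ∑ i, T / (T - ρ i) ≤
      ∑ i, ((if i < j then K else 0) + if i = j then -(J * K) else 0) := by
    refine Finset.sum_le_sum fun i _ => ?_
    rcases lt_trichotomy i j with h | h | h
    · simp only [h, h.ne, if_true, if_false, add_zero]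
      have := hlow i h
      rw [hK, div_le_div_iff₀ (by linarith [hlow' i h]) hβ']
      linarith
    · subst h
      simp only [lt_irrefl, if_true, if_false, zero_add]
      have e : J * K = T / (R - T) := by
        rw [hK, mul_one_div, div_eq_div_iff hβ'.ne' (by linarith), hβ]
        linear_combination -hTeq
      rw [e, ← neg_sub (ρ i) T, div_neg, neg_le_neg_iff]
      exact div_le_div_of_nonneg_left hT0.le (by linarith) (by linarith)
    · simp only [h.not_gt, h.ne', if_false, add_zero]
      exact (div_neg_of_pos_of_neg hT0 (by linarith [hρcase i h.le])).le
  have hval : ∑ i, ((if i < j then K else 0) + if i = j then -(J * K) else 0) = -K := by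
    rw [Finset.sum_add_distrib, ← Finset.sum_filter, Finset.sum_const]
    have : (Finset.univ.filter fun i => i < j) = Finset.Iio j := by ext; simp
    rw [this, Fin.card_Iio]
    simp [hJ]
    ring
  rw [hval] at hsum
  nlinarith

/-- The critical points of a polynomial with positive roots are nonnegative: `F` with `a = 0`,
`b = 1` is positive on the negative axis. -/
theorem deriv_root_nonneg {n : ℕ} (hn : 1 ≤ n) (l : ℝ) (hl : l ≠ 0) (ρ : Fin n → ℝ)
    (hρpos : ∀ i, 0 < ρ i) (Q : ℝ[X]) (hQ : Q = C l * ∏ j, (X - C (ρ j))) (x : ℝ)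
    (hx : (derivative Q).eval x = 0) : 0 ≤ x := by
  by_contra h
  push Not at h
  have hne : ∀ i, x ≠ ρ i := fun i => (h.trans (hρpos i)).ne
  have h1 := eval_S 0 1 l ρ Q hQ x hne
  simp only [eval_add, eval_mul, eval_C, hx, zero_mul, mul_zero, add_zero, zero_add, one_mul] at h1
  have : 0 < ∑ i, x / (x - ρ i) := by
    refine Finset.sum_pos (fun i _ => ?_) ⟨⟨0, hn⟩, Finset.mem_univ _⟩
    exact div_pos_of_neg_of_neg h (by linarith [hρpos i])
  have h2 : ∏ i, (x - ρ i) ≠ 0 := Finset.prod_ne_zero_iff.2 fun i _ => sub_ne_zero.2 (hne i)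
  exact mul_ne_zero (mul_ne_zero hl h2) this.ne' h1.symm

/-- Upper bound lemma: if the `j`-th smallest root of `Q` is at most
`r_j`, where `(r_j)` is strictly increasing positive with `α = max_j r_j/r_{j+1}`, then
for `1 ≤ q ≤ m-1` the `j`-th smallest root of `S = q·Q + m·X·Q'` is at most `r_j` and at
most `j·r_j/((j+1)(1-α))` (`j` counted starting from `1`); and for `q = 0`, for
`2 ≤ j ≤ n`, the `(j-1)`-th smallest root of `Q'` is at most `r_j` and at most
`j·r_j/((j+1)(1-α))`. Root sequences are encoded via factorizations into linear factors. -/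
theorem stmt5 (n m : ℕ) (hn : 1 ≤ n) (hm : 1 ≤ m)
    (r : Fin n → ℝ) (hr : StrictMono r) (hrpos : ∀ j, 0 < r j)
    (α : ℝ)
    (hα : IsGreatest {x : ℝ | ∃ i j : Fin n, (i : ℕ) + 1 = (j : ℕ) ∧ x = r i / r j} α)
    (Q : Polynomial ℝ) (hQdeg : Q.natDegree = n)
    (ρ : Fin n → ℝ) (hρ : Monotone ρ) (hρpos : ∀ j, 0 < ρ j)
    (hQfac : Q = C Q.leadingCoeff * ∏ j, (X - C (ρ j)))
    (hub : ∀ j, ρ j ≤ r j) :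
    (∀ q : ℕ, 1 ≤ q → q ≤ m - 1 →
      ∀ S : Polynomial ℝ, S = C (q : ℝ) * Q + C (m : ℝ) * X * derivative Q →
      ∀ s : Fin n → ℝ, Monotone s →
      S = C S.leadingCoeff * ∏ i, (X - C (s i)) →
      ∀ j : Fin n, s j ≤ r j ∧
        s j ≤ ((j : ℕ) + 1 : ℝ) * r j / ((((j : ℕ) + 2 : ℝ)) * (1 - α)))
    ∧
    (∀ u : Fin (n - 1) → ℝ, Monotone u →
      derivative Q = C (derivative Q).leadingCoeff * ∏ i, (X - C (u i)) →
      ∀ i : Fin (n - 1), ∀ j : Fin n, (j : ℕ) = (i : ℕ) + 1 →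
        u i ≤ r j ∧
        u i ≤ ((i : ℕ) + 2 : ℝ) * r j / ((((i : ℕ) + 3 : ℝ)) * (1 - α))) := by
  have hl : Q.leadingCoeff ≠ 0 := by
    rw [leadingCoeff_ne_zero]
    rintro rfl
    simp at hQdeg
    omega
  obtain ⟨hα0, hα1⟩ : 0 < α ∧ α < 1 := by
    obtain ⟨i, j, hij, rfl⟩ := hα.1
    refine ⟨div_pos (hrpos i) (hrpos j), ?_⟩
    rw [div_lt_one (hrpos j)]
    exact hr (Fin.lt_def.2 (by omega))
  have hrα : ∀ i j, i < j → r i ≤ α * r j := fun i j hij => by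
    have hij' : (i : ℕ) < j := hij
    let k : Fin n := ⟨(j : ℕ) - 1, by omega⟩
    have h1 : r i ≤ r k := hr.monotone (Fin.le_def.2 (show (i : ℕ) ≤ (j : ℕ) - 1 by omega))
    have h2 : r k / r j ≤ α := hα.2 ⟨k, j, show (j : ℕ) - 1 + 1 = j by omega, rfl⟩
    rw [div_le_iff₀ (hrpos j)] at h2
    exact h1.trans h2
  refine ⟨?_, ?_⟩
  · intro q _ hqm S hSdef s hs hS j
    rw [hSdef] at hS
    have hqm' : (q : ℝ) ≤ m := by exact_mod_cast hqm.trans (Nat.sub_le m 1)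
    have hm' : (0 : ℝ) < m := by exact_mod_cast hm
    exact ⟨(root_le hn _ _ _ _ q.cast_nonneg hm' hl ρ s hρ hρpos hs Q hQfac hS j).trans (hub j),
      root_le_bound hn _ _ _ _ q.cast_nonneg hqm' hm' hl ρ s r hρ hρpos hs Q hQfac hS hrpos hub
        α hα0 hα1 hrα j⟩
  · intro u hu hQ' i j hij
    obtain ⟨k, rfl⟩ : ∃ k, n = k + 1 := ⟨n - 1, by omega⟩
    change Fin k → ℝ at u
    change Fin k at i
    have hu0 : ∀ i, 0 ≤ u i := fun i => by
      refine deriv_root_nonneg hn _ hl ρ hρpos Q hQfac (u i) ?_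
      rw [hQ']
      simp only [eval_mul, eval_prod, eval_sub, eval_X, eval_C]
      exact mul_eq_zero_of_right _ (Finset.prod_eq_zero (Finset.mem_univ i) (sub_self _))
    let s : Fin (k + 1) → ℝ := Fin.cons 0 u
    have hs : Monotone s := by
      intro x y hxy
      induction x using Fin.cases with
      | zero =>
        induction y using Fin.cases with
        | zero => exact le_rfl
        | succ y => exact hu0 y
      | succ x =>
        induction y using Fin.cases with
        | zero => exact absurd hxy (not_le.2 (Fin.succ_pos x))
        | succ y => exact hu (Fin.succ_le_succ_iff.1 hxy)
    have hS : C (0 : ℝ) * Q + C 1 * X * derivative Q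
        = C (derivative Q).leadingCoeff * ∏ i, (X - C (s i)) := by
      rw [Fin.prod_univ_succ]
      simp only [s, Fin.cons_zero, Fin.cons_succ, C_0, C_1, zero_mul, zero_add, one_mul, sub_zero]
      conv_lhs => rw [hQ']
      exact mul_left_comm _ _ _
    obtain rfl : j = i.succ := Fin.ext (by simpa using hij)
    have h1 := root_le hn _ _ _ _ le_rfl one_pos hl ρ s hρ hρpos hs Q hQfac hS i.succ
    have h2 := root_le_bound hn _ _ _ _ le_rfl zero_le_one one_pos hl ρ s r hρ hρpos hs Q hQfac hS
      hrpos hub α hα0 hα1 hrα i.succ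
    refine ⟨h1.trans (hub _), ?_⟩
    have e1 : ((i.succ : Fin (k + 1)) : ℕ) = (i : ℕ) + 1 := rfl
    have e2 : (((i : ℕ) + 1 : ℕ) : ℝ) + 1 = (i : ℕ) + 2 := by push_cast; ring
    have e3 : (((i : ℕ) + 1 : ℕ) : ℝ) + 2 = (i : ℕ) + 3 := by push_cast; ring
    rw [e1, e2, e3] at h2
    exact h2
end

section
/- Let n, m ≥ 1 be integers, let (r_j)_{1 ≤ j ≤ n} be a strictly increasing sequence of positive reals, and set α = max_{1 ≤ j ≤ n−1} r_j/r_{j+1} (so 0 < α < 1). Let Q be a real polynomial of degree n with all roots real and positive such that, for 1 ≤ j ≤ n, the j-th smallest root of Q (with multiplicity) is at least r_j. Then for every integer q with 1 ≤ q ≤ m−1 and every 1 ≤ j ≤ n, the j-th smallest root of S(X) = q·Q(X) + m·X·Q'(X) is at least β·r_j, where β = 1 − 1/max(1, j − 1 − (2 + log_−(log(α^{−1})))/log(α^{−1})) and log_−(x) = max(0, −log x). For q = 0 and 2 ≤ j ≤ n, the (j−1)-th smallest root of Q' is at least β·r_j with the same β. -/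
/-!
Let `S = q Q + m X Q'`, put `L = log α⁻¹`, count indices `k` from `0`, and let
`t = k - (2 + log_- L) / L`. The `k`-th root of `S` is `≥ y` as soon as at least `n - k` roots of
`S`, with multiplicity, lie in `[y, ∞)`, so the task is a lower bound for a number of roots.

If `t ≤ 1`, the bound claimed is `0`, and `S` has no negative root because
`S / Q = q + m ∑ x / (x - ρ_i)` is positive for `x < 0`. Otherwise take `y = (1 - 1 / t) r_k`, which
is below `r_k ≤ ρ_k`. A root of `Q` of multiplicity `μ` is a root of `S` of multiplicity at least
`μ - 1`, and between consecutive positive roots of `Q` there is a root of `S` by Rolle's theorem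
applied to `X ^ (2 q) * Q ^ (2 m)`. Hence `S` loses at most one root in `[y, ∞)` against `Q`
(`card_filter_roots_le_add_one`), which is enough when `ρ_{k-1} ≥ y`. When `ρ_{k-1} < y`, the
inequality `S y / Q y > 0` forces a further root of `S` between `y` and `ρ_k`
(`card_filter_roots_le_of_pos`).

That inequality is `sum_div_sub_pos`: in `∑ y / (y - ρ_i)` the terms `i < k` are at least `1`, the
term `i = k` is at least `-(t - 1)`, and the terms `i > k` are at least
`-1 / (exp (L (i - k)) - 1)`, because `r_i ≥ r_k exp (L (i - k))`. The series
`∑_{l ≥ 1} 1 / (exp (L l) - 1)` is at most `(2 + log_- L) / L` by comparison with an integral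
(`sum_inv_exp_sub_one_le`), so the sum is at least `k - (t - 1) - (2 + log_- L) / L = 1`.

The statement about `Q'` is the case `q = 0`, `m = 1`, where `S = X Q'` only has the additional
root `0 < y`.
-/

open Polynomial

/-- `log_-(x) = max(0, -log x)`. -/
noncomputable def logMinus (x : ℝ) : ℝ := max 0 (-Real.log x)

/-! ### Bounding the Lambert-type series -/

lemma neg_log_one_sub_exp_le {L : ℝ} (hL : 0 < L) :
    -Real.log (1 - Real.exp (-L)) ≤ 1 + logMinus L := by
  have hpos : 0 < 1 - Real.exp (-L) := by
    have : Real.exp (-L) < 1 := by rw [Real.exp_lt_one_iff]; linarith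
    linarith
  unfold logMinus
  rcases le_total 1 L with h | h
  · have h1 : Real.exp (-1) ≤ 1 - Real.exp (-L) := by
      have h2 : Real.exp (-L) ≤ Real.exp (-1) := Real.exp_le_exp.2 (by linarith)
      have h3 : Real.exp (-1) ≤ 1 / 2 := by
        have := Real.add_one_le_exp (1 : ℝ)
        rw [Real.exp_neg, inv_eq_one_div]
        exact one_div_le_one_div_of_le (by norm_num) (by linarith)
      linarith
    have := (Real.le_log_iff_exp_le hpos).2 h1
    have := le_max_left 0 (-Real.log L)
    linarith
  · have h1 : Real.exp (-1) * L ≤ 1 - Real.exp (-L) := by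
      have h2 : Real.exp (-1) ≤ Real.exp (-L) := Real.exp_le_exp.2 (by linarith)
      have h3 := Real.add_one_le_exp L
      have h4 : Real.exp (-L) * Real.exp L = 1 := by rw [← Real.exp_add]; simp
      nlinarith [Real.exp_pos (-L), Real.exp_pos (-1)]
    have h5 := Real.log_le_log (by positivity) h1
    rw [Real.log_mul (by positivity) hL.ne', Real.log_exp] at h5
    have := le_max_right 0 (-Real.log L)
    linarith

/-- The terms after the first are compared with increments of `x ↦ log (1 - exp (-L x)) / L`, an
antiderivative of `x ↦ 1 / (exp (L x) - 1)`. -/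
lemma sum_inv_exp_sub_one_le_log {L : ℝ} (hL : 0 < L) (N : ℕ) :
    ∑ l ∈ Finset.range (N + 1), 1 / (Real.exp (L * ((l : ℝ) + 1)) - 1) ≤
      (1 + Real.log (1 - Real.exp (-(L * ((N : ℝ) + 1)))) - Real.log (1 - Real.exp (-L))) / L := by
  induction N with
  | zero =>
    have := Real.add_one_le_exp L
    simp only [zero_add, Finset.range_one, Finset.sum_singleton, Nat.cast_zero, mul_one,
      add_sub_cancel_right]
    exact one_div_le_one_div_of_le hL (by linarith)
  | succ N ih =>
    rw [Finset.sum_range_succ]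
    push_cast
    set a := Real.exp (-(L * ((N : ℝ) + 1 + 1))) with ha
    set b := Real.exp (-(L * ((N : ℝ) + 1))) with hb
    have hpos : 0 < L * ((N : ℝ) + 1) := by positivity
    have hb1 : b < 1 := by rw [hb, Real.exp_lt_one_iff]; linarith
    have ha1 : a < 1 := by rw [ha, Real.exp_lt_one_iff]; linarith
    have ha0 : 0 < a := Real.exp_pos _
    have hab : b = a * Real.exp L := by rw [ha, hb, ← Real.exp_add]; ring_nf
    have hterm : 1 / (Real.exp (L * ((N : ℝ) + 1 + 1)) - 1) = a / (1 - a) := by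
      have : Real.exp (L * ((N : ℝ) + 1 + 1)) = a⁻¹ := by rw [ha, Real.exp_neg, inv_inv]
      rw [this]
      have : (1 - a) ≠ 0 := by linarith
      have h' : (a⁻¹ - 1) ≠ 0 := by
        have := (one_lt_inv₀ ha0).2 ha1
        linarith
      field_simp
    have hlog := Real.one_sub_inv_le_log_of_pos
      (show 0 < (1 - a) / (1 - b) from div_pos (by linarith) (by linarith))
    rw [Real.log_div (by linarith) (by linarith), inv_div] at hlog
    have hmain : a / (1 - a) * L ≤ 1 - (1 - b) / (1 - a) := by
      have h1 : 1 - (1 - b) / (1 - a) = (b - a) / (1 - a) := by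
        have : (1 - a) ≠ 0 := by linarith
        field_simp
        ring
      rw [h1, div_mul_eq_mul_div]
      apply div_le_div_of_nonneg_right _ (by linarith)
      have := Real.add_one_le_exp L
      rw [hab]
      nlinarith
    rw [hterm]
    rw [le_div_iff₀ hL] at ih ⊢
    rw [add_mul]
    linarith

/-- The source of the constant `(2 + log_- L) / L`: it bounds `∑_{l ≥ 1} 1 / (exp (L l) - 1)`. -/
lemma sum_inv_exp_sub_one_le {L : ℝ} (hL : 0 < L) (N : ℕ) :
    ∑ l ∈ Finset.range N, 1 / (Real.exp (L * ((l : ℝ) + 1)) - 1) ≤ (2 + logMinus L) / L := by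
  have h1 := neg_log_one_sub_exp_le hL
  rcases N with _ | N
  · have : 0 ≤ logMinus L := le_max_left _ _
    simp only [Finset.range_zero, Finset.sum_empty]
    positivity
  · refine (sum_inv_exp_sub_one_le_log hL N).trans (div_le_div_of_nonneg_right ?_ hL.le)
    have hpos : 0 < L * ((N : ℝ) + 1) := by positivity
    have : Real.log (1 - Real.exp (-(L * ((N : ℝ) + 1)))) ≤ 0 := by
      apply Real.log_nonpos
      · have : Real.exp (-(L * ((N : ℝ) + 1))) < 1 := by rw [Real.exp_lt_one_iff]; linarith
        linarith
      · linarith [Real.exp_pos (-(L * ((N : ℝ) + 1)))]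
    linarith

/-! ### The polynomial `q Q + m X Q'` and its roots in the gaps of `Q` -/

/-- The polynomial `q Q + m X Q'`. The case `q = 0`, `m = 1` is `X Q'`, so that the derivative of
`Q` is covered too. -/
noncomputable def twist (q m : ℕ) (Q : ℝ[X]) : ℝ[X] :=
  C (q : ℝ) * Q + C (m : ℝ) * X * derivative Q

/-- For `x > 0` the twist is, up to nonvanishing factors and powers of `Q`, the derivative of
`X ^ q * Q ^ m`; even exponents are used so that the potential is nonnegative. -/
lemma X_mul_derivative_twist (q m : ℕ) (hm : 1 ≤ m) (Q : ℝ[X]) :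
    X * derivative (X ^ (2 * q) * Q ^ (2 * m)) =
      2 * X ^ (2 * q) * Q ^ (2 * m - 1) * twist q m Q := by
  obtain ⟨m, rfl⟩ := Nat.exists_eq_add_of_le' hm
  have h2 : 2 * (m + 1) - 1 = 2 * m + 1 := by omega
  rw [h2, derivative_mul, derivative_pow Q, derivative_X_pow, h2, twist]
  have h3 : (X : ℝ[X]) * X ^ (2 * q - 1) * C ((2 * q : ℕ) : ℝ) =
      X ^ (2 * q) * C ((2 * q : ℕ) : ℝ) := by
    rcases q with _ | q
    · simp
    · rw [← pow_succ']
      congr 2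
  calc _ = (X * X ^ (2 * q - 1) * C ((2 * q : ℕ) : ℝ)) * Q ^ (2 * (m + 1))
        + X ^ (2 * q) * (X * (C (((2 * (m + 1) : ℕ)) : ℝ) * Q ^ (2 * m + 1) * derivative Q)) := by ring
    _ = _ := by
      rw [h3]
      simp only [Nat.cast_mul, Nat.cast_ofNat, C_mul]
      have : (C 2 : ℝ[X]) = 2 := rfl
      rw [this]
      ring

/-- A gap `(a, b)` of `Q` whose right end is a root of `Q` contains a root of the twist, if the left
end is a root as well (Rolle) or if the potential `X ^ (2 q) * Q ^ (2 m)` is positive and strictly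
increasing at the left end. -/
lemma exists_twist_root (q m : ℕ) (hm : 1 ≤ m) (Q : ℝ[X]) {a b : ℝ} (ha : 0 < a) (hab : a < b)
    (hb : Q.eval b = 0) (hQa : Q.eval a = 0 ∨ 0 < Q.eval a * (twist q m Q).eval a)
    (hno : ∀ z ∈ Set.Ioo a b, Q.eval z ≠ 0) :
    ∃ z, (a < z ∧ z < b) ∧ (twist q m Q).eval z = 0 := by
  set P : ℝ[X] := X ^ (2 * q) * Q ^ (2 * m) with hP
  have hid : ∀ x : ℝ, x * (derivative P).eval x =
      2 * x ^ (2 * q) * Q.eval x ^ (2 * m - 1) * (twist q m Q).eval x := by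
    intro x
    have := congrArg (eval x) (X_mul_derivative_twist q m hm Q)
    rw [← hP] at this
    simpa only [eval_mul, eval_X, eval_pow, eval_ofNat] using this
  have hPb : P.eval b = 0 := by simp [hP, hb]; omega
  -- a critical point of `P` in the gap is a root of the twist, as `Q` does not vanish there
  suffices h : ∃ z ∈ Set.Ioo a b, (derivative P).eval z = 0 by
    obtain ⟨z, hz, hz0⟩ := h
    refine ⟨z, hz, ?_⟩
    have h1 := hid z
    have hzpos : z ≠ 0 := (ha.trans hz.1).ne'
    rw [hz0, mul_zero, eq_comm] at h1
    simpa [hzpos, hno z hz] using h1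
  rcases hQa with hQa | hQa
  · have hPa : P.eval a = 0 := by simp [hP, hQa]; omega
    obtain ⟨z, hz1, hz2⟩ := exists_deriv_eq_zero hab P.continuousOn (hPa.trans hPb.symm)
    exact ⟨z, hz1, by rwa [← P.deriv]⟩
  · have hQa0 : Q.eval a ≠ 0 := fun h => by simp [h] at hQa
    have hda : 0 < (derivative P).eval a := by
      have h1 := hid a
      have h2 : Q.eval a ^ (2 * m - 1) * (twist q m Q).eval a =
          (Q.eval a ^ 2) ^ (m - 1) * (Q.eval a * (twist q m Q).eval a) := by
        rw [← pow_mul, ← mul_assoc, ← pow_succ]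
        congr 2
        omega
      rw [mul_assoc, h2] at h1
      have : 0 < a * (derivative P).eval a := by rw [h1]; positivity
      exact (pos_iff_pos_of_mul_pos this).1 ha
    have hPa : 0 < P.eval a := by
      simp only [hP, eval_mul, eval_pow, eval_X, pow_mul]
      positivity
    obtain ⟨w, hw, hw'⟩ := exists_deriv_eq_slope (fun x => P.eval x) hab P.continuousOn
      P.differentiable.differentiableOn
    rw [P.deriv, hPb, zero_sub] at hw'
    have hw0 : (derivative P).eval w < 0 := by
      rw [hw']
      exact div_neg_of_neg_of_pos (by linarith) (by linarith)
    obtain ⟨z, hz, hz0⟩ := intermediate_value_Ioo' hw.1.le (derivative P).continuousOn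
      (show (0 : ℝ) ∈ Set.Ioo _ _ from ⟨hw0, hda⟩)
    exact ⟨z, ⟨hz.1, hz.2.trans hw.2⟩, hz0⟩

lemma count_roots_le_twist (q m : ℕ) (Q : ℝ[X]) (hS : twist q m Q ≠ 0) (x : ℝ) :
    Q.roots.count x - 1 ≤ (twist q m Q).roots.count x := by
  rw [count_roots, count_roots, le_rootMultiplicity_iff hS]
  have h := Q.pow_rootMultiplicity_dvd x
  have h1 : (X - C x) ^ (Q.rootMultiplicity x - 1) ∣ Q :=
    (pow_dvd_pow _ (Nat.sub_le _ _)).trans h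
  exact (h1.mul_left _).add ((pow_sub_one_dvd_derivative_of_pow_dvd h).mul_left _)

/-- Lower bound, with multiplicity, for the number of roots of the twist in `[y, ∞)`: each root of
`Q` loses at most one from its multiplicity, and the roots of the twist that are not roots of `Q`
come in addition. -/
lemma card_filter_roots_le (q m : ℕ) (Q : ℝ[X]) (hS : twist q m Q ≠ 0) (y : ℝ) :
    (Q.roots.filter (y ≤ ·)).card +
        (((twist q m Q).roots.toFinset.filter (y ≤ ·)) \ Q.roots.toFinset).card ≤
      ((twist q m Q).roots.filter (y ≤ ·)).card + (Q.roots.toFinset.filter (y ≤ ·)).card := by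
  set S := twist q m Q with hSdef
  set A := Q.roots.toFinset.filter (y ≤ ·) with hA
  set Z := (S.roots.toFinset.filter (y ≤ ·)) \ Q.roots.toFinset with hZ
  have hAle : A.val ≤ Q.roots.filter (y ≤ ·) := by
    rw [hA, Finset.filter_val, Multiset.toFinset_val]
    exact Multiset.filter_le_filter _ (Multiset.dedup_le _)
  have key : (Q.roots.filter (y ≤ ·) - A.val) + Z.val ≤ S.roots.filter (y ≤ ·) := by
    rw [Multiset.le_iff_count]
    intro x
    rw [Multiset.count_add, Multiset.count_sub, Multiset.count_filter, Multiset.count_filter]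
    have hc := count_roots_le_twist q m Q hS x
    by_cases hyx : y ≤ x
    · by_cases hx : x ∈ Q.roots
      · have h1 : Multiset.count x A.val = 1 :=
          Multiset.count_eq_one_of_mem A.nodup (by simpa [hA, hyx] using hx)
        have h2 : Multiset.count x Z.val = 0 :=
          Multiset.count_eq_zero_of_notMem (by
            intro h
            exact (Finset.mem_sdiff.1 (show x ∈ Z from h)).2 (Multiset.mem_toFinset.2 hx))
        simpa [hyx, h1, h2] using hc
      · have h1 : Multiset.count x Q.roots = 0 := Multiset.count_eq_zero_of_notMem hx
        by_cases hxZ : x ∈ Z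
        · have h3 := Multiset.count_eq_one_of_mem Z.nodup hxZ
          have h4 : 1 ≤ Multiset.count x S.roots := by
            rw [Multiset.one_le_count_iff_mem]
            exact Multiset.mem_toFinset.1
              (Finset.mem_filter.1 (Finset.mem_sdiff.1 hxZ).1).1
          simp only [hyx, h1, h3, if_true]
          omega
        · have h3 : Multiset.count x Z.val = 0 := Multiset.count_eq_zero_of_notMem hxZ
          simp [hyx, h1, h3]
    · have h2 : Multiset.count x Z.val = 0 :=
        Multiset.count_eq_zero_of_notMem (by
          intro h
          exact hyx (Finset.mem_filter.1 (Finset.mem_sdiff.1 (show x ∈ Z from h)).1).2)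
      simp [hyx, h2]
  have hcard := Multiset.card_le_card key
  rw [Multiset.card_add, Multiset.card_sub hAle] at hcard
  have := Multiset.card_le_card hAle
  simp only [Finset.card_val] at hcard this
  omega

/-! ### Counting roots in a half-line -/

lemma card_filter_roots_le_add_one (q m : ℕ) (hm : 1 ≤ m) (Q : ℝ[X])
    (hS : twist q m Q ≠ 0) {y : ℝ} (hy : 0 < y) :
    (Q.roots.filter (y ≤ ·)).card ≤ ((twist q m Q).roots.filter (y ≤ ·)).card + 1 := by
  have hQ : Q ≠ 0 := by rintro rfl; simp [twist] at hS
  have h1 := card_filter_roots_le q m Q hS y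
  have h2 : (Q.roots.toFinset.filter (y ≤ ·)).card ≤
      (((twist q m Q).roots.toFinset.filter (y ≤ ·)) \ Q.roots.toFinset).card + 1 := by
    refine Finset.card_le_of_interleaved fun a ha b hb hab hgap => ?_
    simp only [Finset.mem_filter, Multiset.mem_toFinset, mem_roots hQ, IsRoot.def] at ha hb hgap
    have hno : ∀ z ∈ Set.Ioo a b, Q.eval z ≠ 0 := fun z hz h0 =>
      hgap z ⟨h0, ha.2.trans hz.1.le⟩ hz
    obtain ⟨z, hz, hz0⟩ := exists_twist_root q m hm Q (hy.trans_le ha.2) hab hb.1 (Or.inl ha.1) hno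
    refine ⟨z, ?_, hz⟩
    simp only [Finset.mem_sdiff, Finset.mem_filter, Multiset.mem_toFinset, mem_roots hQ,
      mem_roots hS, IsRoot.def]
    exact ⟨⟨hz0, ha.2.trans hz.1.le⟩, hno z hz⟩
  omega

/-- The sign condition at `y` yields one more root of the twist, located between `y` and the first
root of `Q` above `y`, compared with `card_filter_roots_le_add_one`. -/
lemma card_filter_roots_le_of_pos (q m : ℕ) (hm : 1 ≤ m) (Q : ℝ[X])
    (hS : twist q m Q ≠ 0) {y : ℝ} (hy : 0 < y) (hpos : 0 < Q.eval y * (twist q m Q).eval y) :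
    (Q.roots.filter (y ≤ ·)).card ≤ ((twist q m Q).roots.filter (y ≤ ·)).card := by
  have hQ : Q ≠ 0 := by rintro rfl; simp [twist] at hS
  have hQy : Q.eval y ≠ 0 := fun h => by simp [h] at hpos
  have h1 := card_filter_roots_le q m Q hS y
  have h3 : (insert y (Q.roots.toFinset.filter (y ≤ ·))).card =
      (Q.roots.toFinset.filter (y ≤ ·)).card + 1 :=
    Finset.card_insert_of_notMem (by simp [hQ, hQy])
  have h2 : (insert y (Q.roots.toFinset.filter (y ≤ ·))).card ≤
      (((twist q m Q).roots.toFinset.filter (y ≤ ·)) \ Q.roots.toFinset).card + 1 := by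
    refine Finset.card_le_of_interleaved fun a ha b hb hab hgap => ?_
    simp only [Finset.mem_insert, Finset.mem_filter, Multiset.mem_toFinset, mem_roots hQ,
      IsRoot.def] at ha hb hgap
    have hya : y ≤ a := by
      rcases ha with rfl | ha
      · exact le_rfl
      · exact ha.2
    have hQb : Q.eval b = 0 := by
      rcases hb with rfl | hb
      · exact absurd hab (not_lt.2 hya)
      · exact hb.1
    have hQa : Q.eval a = 0 ∨ 0 < Q.eval a * (twist q m Q).eval a := by
      rcases ha with rfl | ha
      · exact Or.inr hpos
      · exact Or.inl ha.1
    have hno : ∀ z ∈ Set.Ioo a b, Q.eval z ≠ 0 := fun z hz h0 =>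
      hgap z (Or.inr ⟨h0, hya.trans hz.1.le⟩) hz
    obtain ⟨z, hz, hz0⟩ := exists_twist_root q m hm Q (hy.trans_le hya) hab hQb hQa hno
    refine ⟨z, ?_, hz⟩
    simp only [Finset.mem_sdiff, Finset.mem_filter, Multiset.mem_toFinset, mem_roots hQ,
      mem_roots hS, IsRoot.def]
    exact ⟨⟨hz0, hya.trans hz.1.le⟩, hno z hz⟩
  omega

lemma roots_C_mul_prod {n : ℕ} (c : ℝ) (hc : c ≠ 0) (s : Fin n → ℝ) :
    (C c * ∏ i, (X - C (s i))).roots = Finset.univ.val.map s := by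
  rw [roots_C_mul _ hc, Finset.prod_eq_multiset_prod]
  have := roots_multiset_prod_X_sub_C (Finset.univ.val.map s)
  rwa [Multiset.map_map] at this

lemma card_filter_map_s6 {n : ℕ} (s : Fin n → ℝ) (y : ℝ) :
    ((Finset.univ.val.map s).filter (y ≤ ·)).card = (Finset.univ.filter (y ≤ s ·)).card := by
  rw [Multiset.filter_map, Multiset.card_map]
  rfl

lemma le_card_filter_of_le {n : ℕ} {s : Fin n → ℝ} (hs : Monotone s) {y : ℝ} {k : Fin n}
    (h : y ≤ s k) : n - k ≤ ((Finset.univ.val.map s).filter (y ≤ ·)).card := by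
  rw [card_filter_map_s6, ← Fin.card_Ici]
  refine Finset.card_le_card fun i hi => ?_
  simpa using h.trans (hs (Finset.mem_Ici.1 hi))

lemma card_filter_le_of_lt {n : ℕ} {s : Fin n → ℝ} (hs : Monotone s) {y : ℝ} {k : Fin n}
    (h : s k < y) : ((Finset.univ.val.map s).filter (y ≤ ·)).card ≤ n - 1 - k := by
  rw [card_filter_map_s6, ← Fin.card_Ioi]
  refine Finset.card_le_card fun i hi => ?_
  rw [Finset.mem_Ioi]
  by_contra hik
  have := hs (not_lt.1 hik)
  simp at hi
  linarith

/-! ### The logarithmic derivative -/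

lemma eval_twist_eq {n : ℕ} (q m : ℕ) (c : ℝ) (ρ : Fin n → ℝ) (Q : ℝ[X])
    (hQ : Q = C c * ∏ j, (X - C (ρ j))) {x : ℝ} (hx : ∀ i, x ≠ ρ i) :
    (twist q m Q).eval x = Q.eval x * (q + m * ∑ i, x / (x - ρ i)) := by
  have hd : (derivative Q).eval x = Q.eval x * ∑ i, 1 / (x - ρ i) := by
    rw [hQ, derivative_C_mul, derivative_prod_finset]
    simp only [eval_mul, eval_C, eval_finsetSum, eval_prod, eval_sub, eval_X, derivative_X_sub_C,
      mul_one, mul_assoc]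
    congr 1
    rw [Finset.mul_sum]
    refine Finset.sum_congr rfl fun i _ => ?_
    rw [← Finset.mul_prod_erase Finset.univ _ (Finset.mem_univ i)]
    have := sub_ne_zero.2 (hx i)
    field_simp
  simp only [twist, eval_add, eval_mul, eval_C, eval_X, hd]
  have : ∑ i, x / (x - ρ i) = x * ∑ i, 1 / (x - ρ i) := by
    rw [Finset.mul_sum]
    exact Finset.sum_congr rfl fun i _ => by ring
  rw [this]
  ring

lemma eval_prod_ne_zero {n : ℕ} {c : ℝ} (hc : c ≠ 0) {ρ : Fin n → ℝ} {Q : ℝ[X]}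
    (hQ : Q = C c * ∏ j, (X - C (ρ j))) {x : ℝ} (hx : ∀ i, x ≠ ρ i) : Q.eval x ≠ 0 := by
  rw [hQ, eval_mul, eval_C, eval_prod]
  refine mul_ne_zero hc (Finset.prod_ne_zero_iff.2 fun i _ => ?_)
  simpa [sub_eq_zero] using hx i

lemma eval_twist_ne_zero_of_neg {n : ℕ} (hn : 1 ≤ n) (q m : ℕ) (hm : 1 ≤ m) {c : ℝ} (hc : c ≠ 0)
    {ρ : Fin n → ℝ} (hρ : ∀ i, 0 < ρ i) {Q : ℝ[X]} (hQ : Q = C c * ∏ j, (X - C (ρ j))) {x : ℝ}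
    (hx : x < 0) : (twist q m Q).eval x ≠ 0 := by
  have hx' : ∀ i, x ≠ ρ i := fun i => (hx.trans (hρ i)).ne
  rw [eval_twist_eq q m c ρ Q hQ hx']
  refine mul_ne_zero (eval_prod_ne_zero hc hQ hx') (ne_of_gt ?_)
  have hsum : 0 < ∑ i, x / (x - ρ i) :=
    Finset.sum_pos (fun i _ => div_pos_of_neg_of_neg hx (by linarith [hρ i]))
      ⟨⟨0, hn⟩, Finset.mem_univ _⟩
  have : (0 : ℝ) < m := by exact_mod_cast hm
  positivity

/-- The ratio condition on consecutive terms, iterated: `r` grows at least like `exp (L d)`. -/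
lemma mul_exp_le {n : ℕ} {r : Fin n → ℝ} {L : ℝ}
    (hstep : ∀ i j : Fin n, (i : ℕ) + 1 = j → r i * Real.exp L ≤ r j) (k : Fin n) (d : ℕ) :
    ∀ i : Fin n, (i : ℕ) = k + d → r k * Real.exp (L * d) ≤ r i := by
  induction d with
  | zero =>
    intro i hi
    have : i = k := Fin.ext (by omega)
    simp [this]
  | succ d ih =>
    intro i hi
    have h1 := ih ⟨k + d, by omega⟩ rfl
    have h2 := hstep ⟨k + d, by omega⟩ i (by simp; omega)
    have h3 : Real.exp (L * ((d + 1 : ℕ) : ℝ)) = Real.exp (L * d) * Real.exp L := by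
      rw [← Real.exp_add]; push_cast; ring_nf
    rw [h3, ← mul_assoc]
    exact (mul_le_mul_of_nonneg_right h1 (Real.exp_pos _).le).trans h2

/-- The central estimate, at `y = (1 - 1 / t) r_k` with `k` counted from `0`. The `k` roots below `y`
contribute at least `1` each, the root of index `k` at least `-(t - 1)`, and the remaining ones
together at least `-(2 + log_- L) / L`; by the choice of `t` the total is at least `1`. -/
lemma sum_div_sub_pos {n : ℕ} {r ρ : Fin n → ℝ} {L t : ℝ} (hL : 0 < L) (ht : 1 < t)
    (hrpos : ∀ j, 0 < r j) (hρpos : ∀ j, 0 < ρ j) (hlb : ∀ j, r j ≤ ρ j)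
    (hstep : ∀ i j : Fin n, (i : ℕ) + 1 = j → r i * Real.exp L ≤ r j) (k : Fin n)
    (hkt : t = (k : ℕ) - (2 + logMinus L) / L)
    (hlt : ∀ i < k, ρ i < (1 - 1 / t) * r k) :
    0 < ∑ i, (1 - 1 / t) * r k / ((1 - 1 / t) * r k - ρ i) := by
  set y := (1 - 1 / t) * r k with hy
  have ht0 : 0 < t := by linarith
  have hβ : 0 < 1 - 1 / t := by
    rw [sub_pos, div_lt_one ht0]; exact ht
  have hy0 : 0 < y := mul_pos hβ (hrpos k)
  have hyr : y = r k - r k / t := by rw [hy]; ring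
  have hrt : 0 < r k / t := div_pos (hrpos k) ht0
  have hyrk : y < r k := by linarith
  -- lower bounds for the terms: below, at and above the index `k`
  let g : ℕ → ℝ := fun i => if i < k then 1 else if i = k then -(t - 1)
    else -(1 / (Real.exp (L * ((i - k : ℕ) : ℝ)) - 1))
  have hg : ∀ i : Fin n, g i ≤ y / (y - ρ i) := by
    intro i
    rcases lt_trichotomy (i : ℕ) (k : ℕ) with h | h | h
    · have h1 := hlt i h
      simp only [g, h, if_true]
      rw [le_div_iff₀ (by linarith)]
      linarith [hρpos i]
    · have hik : i = k := Fin.ext h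
      subst hik
      simp only [g, lt_irrefl, if_false, if_true]
      have h1 := hlb i
      rw [← neg_sub (ρ i) y, div_neg, neg_le_neg_iff, div_le_iff₀ (by linarith)]
      have h2 : y = (t - 1) * (r i / t) := by rw [hyr]; field_simp
      calc y = (t - 1) * (r i / t) := h2
        _ ≤ (t - 1) * (ρ i - y) := mul_le_mul_of_nonneg_left (by linarith) (by linarith)
    · simp only [g, not_lt.2 h.le, h.ne', if_false]
      have h1 := mul_exp_le hstep k (i - k) i (by omega)
      have h2 := hlb i
      have hd : (0 : ℝ) < ((i - k : ℕ) : ℝ) := by exact_mod_cast Nat.sub_pos_of_lt h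
      set E := Real.exp (L * ((i - k : ℕ) : ℝ)) with hE
      have hE1 : 1 < E := by rw [hE, Real.one_lt_exp_iff]; positivity
      have hyE : y * E < ρ i := by
        have : y * E < r k * E := mul_lt_mul_of_pos_right hyrk (by linarith)
        linarith
      have hyρ : y < ρ i := by nlinarith
      rw [← neg_sub (ρ i) y, div_neg, neg_le_neg_iff, div_le_div_iff₀ (by linarith) (by linarith)]
      linarith
  have hsum : ∑ i : Fin n, g i ≤ ∑ i, y / (y - ρ i) := Finset.sum_le_sum fun i _ => hg i
  refine lt_of_lt_of_le ?_ hsum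
  obtain ⟨N, hN⟩ : ∃ N, n = (k + 1) + N := ⟨n - (k + 1), by omega⟩
  have hrange : ∑ i : Fin n, g i = ∑ i ∈ Finset.range ((k + 1) + N), g i := by
    rw [Fin.sum_univ_eq_sum_range, ← hN]
  rw [hrange, Finset.sum_range_add, Finset.sum_range_succ]
  have e1 : ∑ i ∈ Finset.range (k : ℕ), g i = (k : ℕ) := by
    rw [Finset.sum_congr rfl (g := fun _ => (1 : ℝ))]
    · simp
    · intro i hi
      simp [g, Finset.mem_range.1 hi]
  have e2 : g k = -(t - 1) := by simp [g]
  have e3 : ∑ l ∈ Finset.range N, g (k + 1 + l) =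
      -∑ l ∈ Finset.range N, 1 / (Real.exp (L * ((l : ℝ) + 1)) - 1) := by
    rw [← Finset.sum_neg_distrib]
    refine Finset.sum_congr rfl fun l _ => ?_
    have a1 : ¬ ((k : ℕ) + 1 + l < k) := by omega
    have a2 : ¬ ((k : ℕ) + 1 + l = k) := by omega
    have a3 : (k : ℕ) + 1 + l - k = l + 1 := by omega
    simp only [g, a1, a2, a3, if_false]
    push_cast
    rfl
  rw [e1, e2, e3]
  have := sum_inv_exp_sub_one_le hL N
  linarith

/-- At least `n - k` roots of the twist, with multiplicity, are `≥ (1 - 1 / t) r_k`. -/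
lemma le_card_twist_roots {n : ℕ} (q m : ℕ) (hm : 1 ≤ m) {c : ℝ} (hc : c ≠ 0)
    {r ρ : Fin n → ℝ} {L t : ℝ} (hL : 0 < L) (ht : 1 < t)
    (hrpos : ∀ j, 0 < r j) (hρ : Monotone ρ) (hρpos : ∀ j, 0 < ρ j) (hlb : ∀ j, r j ≤ ρ j)
    (hstep : ∀ i j : Fin n, (i : ℕ) + 1 = j → r i * Real.exp L ≤ r j)
    {Q : ℝ[X]} (hQ : Q = C c * ∏ j, (X - C (ρ j))) (k : Fin n)
    (hkt : t = (k : ℕ) - (2 + logMinus L) / L) :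
    n - k ≤ ((twist q m Q).roots.filter ((1 - 1 / t) * r k ≤ ·)).card := by
  have hn : 1 ≤ n := by have := k.2; omega
  have ht0 : 0 < t := by linarith
  have hβ : 0 < 1 - 1 / t := by
    rw [sub_pos, div_lt_one ht0]; exact ht
  have hy0 : 0 < (1 - 1 / t) * r k := mul_pos hβ (hrpos k)
  have hyr : (1 - 1 / t) * r k < r k := by
    have : 0 < r k / t := div_pos (hrpos k) ht0
    have e : (1 - 1 / t) * r k = r k - r k / t := by ring
    linarith
  have hS : twist q m Q ≠ 0 := fun h =>
    eval_twist_ne_zero_of_neg hn q m hm hc hρpos hQ (x := -1) (by norm_num) (by simp [h])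
  have hroots : Q.roots = Finset.univ.val.map ρ := by rw [hQ, roots_C_mul_prod c hc]
  set y := (1 - 1 / t) * r k with hy
  -- If some root of index below `k` is `≥ y`, plain Rolle counting is enough; otherwise the sign at
  -- `y` provides the missing root.
  by_cases hlt : ∀ i < k, ρ i < y
  · have hne : ∀ i, y ≠ ρ i := by
      intro i
      rcases lt_or_ge i k with h | h
      · exact (hlt i h).ne'
      · exact (hyr.trans_le ((hlb k).trans (hρ h))).ne
    have hpos : 0 < Q.eval y * (twist q m Q).eval y := by
      rw [eval_twist_eq q m c ρ Q hQ hne, ← mul_assoc]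
      have h1 := sum_div_sub_pos hL ht hrpos hρpos hlb hstep k hkt hlt
      have h2 : Q.eval y ≠ 0 := eval_prod_ne_zero hc hQ hne
      have h3 : (0 : ℝ) < m := by exact_mod_cast hm
      have h4 : 0 < Q.eval y * Q.eval y := mul_self_pos.2 h2
      refine mul_pos h4 ?_
      rw [← hy] at h1
      positivity
    have h1 := card_filter_roots_le_of_pos q m hm Q hS hy0 hpos
    have h2 := le_card_filter_of_le hρ (hyr.le.trans (hlb k))
    rw [hroots] at h1
    exact h2.trans h1
  · push Not at hlt
    obtain ⟨i, hik, hi⟩ := hlt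
    have h1 := card_filter_roots_le_add_one q m hm Q hS hy0
    have h2 := le_card_filter_of_le hρ hi
    rw [hroots] at h1
    have : (i : ℕ) < k := hik
    omega

/-! ### The root bounds -/

/-- Lower bound lemma: if the `j`-th smallest root of `Q` is at least
`r_j`, where `(r_j)` is strictly increasing positive with `α = max_j r_j/r_{j+1}`, then
for `1 ≤ q ≤ m-1` the `j`-th smallest root of `S = q·Q + m·X·Q'` is at least `β_j·r_j`,
where `β_j = 1 - 1/max(1, j - 1 - (2 + log_-(log α⁻¹))/log α⁻¹)` (`j` counted from `1`);
and for `q = 0`, for `2 ≤ j ≤ n`, the `(j-1)`-th smallest root of `Q'` is at least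
`β_j·r_j`. Root sequences are encoded via factorizations into linear factors. -/
theorem stmt6 (n m : ℕ) (hn : 1 ≤ n) (hm : 1 ≤ m)
    (r : Fin n → ℝ) (hr : StrictMono r) (hrpos : ∀ j, 0 < r j)
    (α : ℝ)
    (hα : IsGreatest {x : ℝ | ∃ i j : Fin n, (i : ℕ) + 1 = (j : ℕ) ∧ x = r i / r j} α)
    (Q : Polynomial ℝ) (hQdeg : Q.natDegree = n)
    (ρ : Fin n → ℝ) (hρ : Monotone ρ) (hρpos : ∀ j, 0 < ρ j)
    (hQfac : Q = C Q.leadingCoeff * ∏ j, (X - C (ρ j)))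
    (hlb : ∀ j, r j ≤ ρ j) :
    (∀ q : ℕ, 1 ≤ q → q ≤ m - 1 →
      ∀ S : Polynomial ℝ, S = C (q : ℝ) * Q + C (m : ℝ) * X * derivative Q →
      ∀ s : Fin n → ℝ, Monotone s →
      S = C S.leadingCoeff * ∏ i, (X - C (s i)) →
      ∀ j : Fin n,
        (1 - 1 / max 1 (((j : ℕ) + 1 : ℝ) - 1
            - (2 + logMinus (Real.log α⁻¹)) / Real.log α⁻¹)) * r j ≤ s j)
    ∧
    (∀ u : Fin (n - 1) → ℝ, Monotone u →
      derivative Q = C (derivative Q).leadingCoeff * ∏ i, (X - C (u i)) →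
      ∀ i : Fin (n - 1), ∀ j : Fin n, (j : ℕ) = (i : ℕ) + 1 →
        (1 - 1 / max 1 (((i : ℕ) + 2 : ℝ) - 1
            - (2 + logMinus (Real.log α⁻¹)) / Real.log α⁻¹)) * r j ≤ u i) := by
  have hc : Q.leadingCoeff ≠ 0 := by
    rw [Ne, leadingCoeff_eq_zero]
    rintro rfl
    simp at hQdeg
    omega
  obtain ⟨⟨i₀, j₀, hij₀, hα₀⟩, hub⟩ := hα
  have hαpos : 0 < α := by rw [hα₀]; exact div_pos (hrpos _) (hrpos _)
  have hα1 : α < 1 := by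
    rw [hα₀, div_lt_one (hrpos _)]
    exact hr (Fin.lt_def.2 (by omega))
  set L := Real.log α⁻¹ with hLdef
  have hL : 0 < L := Real.log_pos ((one_lt_inv₀ hαpos).2 hα1)
  have hexp : Real.exp L = α⁻¹ := Real.exp_log (inv_pos.2 hαpos)
  have hstep : ∀ i j : Fin n, (i : ℕ) + 1 = j → r i * Real.exp L ≤ r j := by
    intro i j hij
    have h1 : r i / r j ≤ α := hub ⟨i, j, hij, rfl⟩
    rw [div_le_iff₀ (hrpos j)] at h1
    rw [hexp, ← div_eq_mul_inv, div_le_iff₀ hαpos]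
    linarith
  have hne : ∀ q m' : ℕ, 1 ≤ m' → ∀ x < 0, (twist q m' Q).eval x ≠ 0 := fun q m' hm' x hx =>
    eval_twist_ne_zero_of_neg hn q m' hm' hc hρpos hQfac hx
  constructor
  · rintro q - - S hS s hs hSfac j
    have hSt : S = twist q m Q := hS
    have hS0 : S ≠ 0 := fun h => hne q m hm (-1) (by norm_num) (by simp [← hSt, h])
    have hroots : (twist q m Q).roots = Finset.univ.val.map s := by
      rw [← hSt, hSfac, roots_C_mul_prod _ (leadingCoeff_ne_zero.2 hS0)]
    rw [add_sub_cancel_right]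
    -- if the maximum is `1`, the bound is `0`, and the twist has no negative root
    rcases le_or_gt ((j : ℕ) - (2 + logMinus L) / L) 1 with h | h
    · rw [max_eq_left h]
      simp only [div_one, sub_self, zero_mul]
      by_contra! hneg
      refine hne q m hm (s j) hneg ?_
      have : s j ∈ (twist q m Q).roots := by
        rw [hroots]; exact Multiset.mem_map_of_mem _ (Finset.mem_univ j)
      exact isRoot_of_mem_roots this
    · rw [max_eq_right h.le]
      by_contra! hlt
      have h1 := le_card_twist_roots q m hm hc hL h hrpos hρ hρpos hlb hstep hQfac j rfl
      have h2 := card_filter_le_of_lt hs hlt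
      rw [hroots] at h1
      have := j.2
      omega
  · intro u hu hufac i j hij
    have htw : twist 0 1 Q = X * derivative Q := by simp [twist]
    have hS0 : twist 0 1 Q ≠ 0 := fun h => hne 0 1 le_rfl (-1) (by norm_num) (by simp [h])
    have hd0 : derivative Q ≠ 0 := fun h => hS0 (by rw [htw, h, mul_zero])
    have hdroots : (derivative Q).roots = Finset.univ.val.map u := by
      rw [hufac, roots_C_mul_prod _ (leadingCoeff_ne_zero.2 hd0)]
    have hroots : (twist 0 1 Q).roots = 0 ::ₘ Finset.univ.val.map u := by
      rw [htw, roots_mul (mul_ne_zero X_ne_zero hd0), roots_X, hdroots, Multiset.singleton_add]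
    have hcast : ((i : ℕ) + 2 : ℝ) - 1 = ((j : ℕ) : ℝ) := by rw [hij]; push_cast; ring
    rw [hcast]
    rcases le_or_gt ((j : ℕ) - (2 + logMinus L) / L) 1 with h | h
    · rw [max_eq_left h]
      simp only [div_one, sub_self, zero_mul]
      by_contra! hneg
      refine hne 0 1 le_rfl (u i) hneg ?_
      have : u i ∈ (twist 0 1 Q).roots := by
        rw [hroots]
        exact Multiset.mem_cons_of_mem (Multiset.mem_map_of_mem _ (Finset.mem_univ i))
      exact isRoot_of_mem_roots this
    · rw [max_eq_right h.le]
      by_contra! hlt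
      have h1 := le_card_twist_roots 0 1 le_rfl hc hL h hrpos hρ hρpos hlb hstep hQfac j rfl
      have h2 := card_filter_le_of_lt hu hlt
      have hy : 0 < (1 - 1 / ((j : ℕ) - (2 + logMinus L) / L)) * r j := by
        refine mul_pos ?_ (hrpos j)
        rw [sub_pos, div_lt_one (by linarith)]
        exact h
      have h3 : n - j ≤ ((Finset.univ.val.map u).filter
          ((1 - 1 / ((j : ℕ) - (2 + logMinus L) / L)) * r j ≤ ·)).card := by
        rwa [hroots, Multiset.filter_cons_of_neg _ (not_le.2 hy)] at h1
      have := i.2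
      omega
end
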